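/- Let 1≤p≤2 and let ω be a radial weight in the class 𝒟=D̂∩Ď. Then there exists a constant C=C(p,ω)≥1 such that for every injective analytic function f on 𝔻 with Maclaurin coefficients f̂(k): (1/C)·Σ_{k=0}^∞ |f̂(k)|^p (k+1)^{p−1} ω_k ≤ J^p_ω(f) ≤ C·Σ_{k=0}^∞ |f̂(k)|^p (k+1)^{p−1} ω_k. -/

import Mathlib

open MeasureTheory Real Set Metric

noncomputable section

/-- The tail integral `ω̂(r) = ∫_r^1 ω(t) dt` of a radial weight, as a function of the radius. -/
def tailInt (ω : ℝ → ℝ) (r : ℝ) : ℝ := ∫ t in Ioo r 1, ω t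

/-- A radial weight on the unit disc, identified with its profile on `[0,1)`:
nonnegative, measurable, integrable on `(0,1)`, with strictly positive tail integrals. -/
def IsRadialWeight (ω : ℝ → ℝ) : Prop :=
  Measurable ω ∧ (∀ r, 0 ≤ ω r) ∧ IntegrableOn ω (Ioo (0:ℝ) 1) ∧
    ∀ r ∈ Ico (0:ℝ) 1, 0 < tailInt ω r

/-- The class `D̂` of radial weights whose tail integral satisfies a doubling condition. -/
def Dhat (ω : ℝ → ℝ) : Prop :=
  ∃ C : ℝ, 1 < C ∧ ∀ r ∈ Ico (0:ℝ) 1, tailInt ω r ≤ C * tailInt ω ((1 + r) / 2)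

/-- The class `Ď` of radial weights. -/
def Dcheck (ω : ℝ → ℝ) : Prop :=
  ∃ K : ℝ, 1 < K ∧ ∃ C : ℝ, 1 < C ∧ ∀ r ∈ Ico (0:ℝ) 1,
    C * tailInt ω (1 - (1 - r) / K) ≤ tailInt ω r

/-- The class `𝒟 = D̂ ∩ Ď`. -/
def Dclass (ω : ℝ → ℝ) : Prop := Dhat ω ∧ Dcheck ω

/-- The moment `ω_x = ∫_0^1 r^x ω(r) dr` of a radial weight. -/
def momentW (ω : ℝ → ℝ) (x : ℝ) : ℝ := ∫ r in Ioo (0:ℝ) 1, r ^ x * ω r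

/-- The class `ℳ` of radial weights. -/
def Mclass (ω : ℝ → ℝ) : Prop :=
  ∃ K : ℝ, 1 < K ∧ ∃ C : ℝ, 1 < C ∧ ∀ x : ℝ, 1 ≤ x → C * momentW ω (K * x) ≤ momentW ω x

/-- The maximum modulus `M_∞(r,f)` on the circle of radius `r`. -/
def Minf (f : ℂ → ℂ) (r : ℝ) : ℝ :=
  sSup ((fun z => ‖f z‖) '' sphere (0:ℂ) r)

/-- The integral mean `M_q(r,f)` for `0 < q < ∞`. -/
def Mq (q : ℝ) (f : ℂ → ℂ) (r : ℝ) : ℝ :=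
  ((2 * π)⁻¹ * ∫ θ in (0:ℝ)..(2 * π),
      ‖f ((r : ℂ) * Complex.exp ((θ : ℂ) * Complex.I))‖ ^ q) ^ q⁻¹

/-- `J^p_ω(f) = ∫_0^1 M_∞(r,f)^p ω(r) dr`. -/
def Jp (p : ℝ) (ω : ℝ → ℝ) (f : ℂ → ℂ) : ℝ :=
  ∫ r in Ioo (0:ℝ) 1, Minf f r ^ p * ω r

/-- `‖f‖_{H^p_ω}^p = ∫_𝔻 p²|f|^{p-2}|f'|² ω̂(|z|) dA(z)`, integrand `0` where `f' = 0`. -/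
def HpNormP (p : ℝ) (ω : ℝ → ℝ) (f : ℂ → ℂ) : ℝ :=
  ∫ z in ball (0:ℂ) 1,
    if deriv f z = 0 then 0
    else p ^ 2 * ‖f z‖ ^ (p - 2) * ‖deriv f z‖ ^ 2
        * tailInt ω (‖z‖)

/-- `‖f‖_{S^p_ω}^p = ∫_0^1 (∫_{D(0,r)} |f'|² dA)^{p/2} ω(r) dr`. -/
def SpNormP (p : ℝ) (ω : ℝ → ℝ) (f : ℂ → ℂ) : ℝ :=
  ∫ r in Ioo (0:ℝ) 1,
    (∫ z in ball (0:ℂ) r, ‖deriv f z‖ ^ 2) ^ (p / 2) * ω r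

/-- The `k`-th Maclaurin coefficient `f̂(k) = f^{(k)}(0)/k!`. -/
def coefF (f : ℂ → ℂ) (k : ℕ) : ℂ := iteratedDeriv k f 0 / (k.factorial : ℂ)

/-- Weighted Bergman-type integral `∫_𝔻 |f(z)|^p (1-|z|)^x w(|z|) dA(z)`. -/
def Apq (p x : ℝ) (w : ℝ → ℝ) (f : ℂ → ℂ) : ℝ :=
  ∫ z in ball (0:ℂ) 1,
    ‖f z‖ ^ p * (1 - ‖z‖) ^ x * w (‖z‖)

/-- Weighted Dirichlet-type integral `∫_𝔻 |f'(z)|^p (1-|z|)^x w(|z|) dA(z)`. -/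
def DirInt (p x : ℝ) (w : ℝ → ℝ) (f : ℂ → ℂ) : ℝ :=
  ∫ z in ball (0:ℂ) 1,
    ‖deriv f z‖ ^ p * (1 - ‖z‖) ^ x * w (‖z‖)

/-- The class `𝒮` of normalized univalent functions on the unit disc. -/
def InSclass (f : ℂ → ℂ) : Prop :=
  DifferentiableOn ℂ f (ball (0:ℂ) 1) ∧ InjOn f (ball (0:ℂ) 1) ∧ f 0 = 0 ∧ deriv f 0 = 1

/-!
For a weight in `𝒟` the tails `ω̂(1 - 2⁻ⁿ)` are doubling and decay geometrically in `n`, so the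
moment `ω_k` is comparable to `ω̂(1 - 2⁻ⁿ)` whenever `2ⁿ ≤ k + 1 < 2ⁿ⁺¹`, and `∫₀¹ G ω` is
controlled by sampling an increasing `G` at the radii `1 - 2⁻ⁿ`.

The upper bound holds for every analytic `f`. Start from `M_∞(r, f) ≤ ∑ |f̂(k)| rᵏ` and apply
Hölder's inequality with the weights `rᵏ (k + 1)^(δ - 1)`: it costs a factor `2^(n δ (p - 1))` at
`r = 1 - 2⁻ⁿ`, which for small `δ` the geometric decay of the tails absorbs.

The lower bound uses injectivity through the area formula: `π ∑ k |f̂(k)|² r²ᵏ` is the area of the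
image of the disc of radius `r`, hence at most `π M_∞(r, f)²`. On the block `2ⁿ ≤ k + 1 < 2ⁿ⁺¹` the
factor `r²ᵏ` is bounded below at `r = 1 - 2⁻ⁿ`, and Hölder's inequality, using `p ≤ 2`, passes from
squares to `p`-th powers.
-/

open Filter
open scoped NNReal ENNReal Topology

section DyadicRadius

/-- The radius `1 - 2⁻ʲ`, the left endpoint of the `j`-th dyadic annulus. -/
def dyadicRadius (j : ℕ) : ℝ := 1 - (1 / 2) ^ j

@[simp]
lemma dyadicRadius_zero : dyadicRadius 0 = 0 := by simp [dyadicRadius]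

lemma one_sub_dyadicRadius (j : ℕ) : 1 - dyadicRadius j = (1 / 2) ^ j := sub_sub_cancel _ _

lemma dyadicRadius_lt_one (j : ℕ) : dyadicRadius j < 1 := sub_lt_self _ (by positivity)

lemma dyadicRadius_mono : Monotone dyadicRadius := fun _ _ h ↦
  sub_le_sub_left (pow_le_pow_of_le_one (by norm_num) (by norm_num) h) _

lemma dyadicRadius_nonneg (j : ℕ) : 0 ≤ dyadicRadius j :=
  dyadicRadius_zero.symm.trans_le (dyadicRadius_mono j.zero_le)

lemma dyadicRadius_mem_Ico (j : ℕ) : dyadicRadius j ∈ Ico (0 : ℝ) 1 :=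
  ⟨dyadicRadius_nonneg j, dyadicRadius_lt_one j⟩

lemma half_le_dyadicRadius {j : ℕ} (hj : j ≠ 0) : 1 / 2 ≤ dyadicRadius j :=
  calc (1 : ℝ) / 2 = dyadicRadius 1 := by norm_num [dyadicRadius]
    _ ≤ dyadicRadius j := dyadicRadius_mono (Nat.one_le_iff_ne_zero.2 hj)

lemma dyadicRadius_pow_le_exp (j k : ℕ) :
    dyadicRadius j ^ k ≤ rexp (-(k * (1 / 2) ^ j)) := by
  rw [← mul_neg, Real.exp_nat_mul]
  exact pow_le_pow_left₀ (dyadicRadius_nonneg j) (Real.one_sub_le_exp_neg _) k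

lemma one_fourth_pow_le_dyadicRadius_pow {n c k : ℕ} (hn : n ≠ 0) (hk : k ≤ c * 2 ^ n) :
    (1 / 4 : ℝ) ^ c ≤ dyadicRadius n ^ k := by
  obtain ⟨m, rfl⟩ := Nat.exists_eq_succ_of_ne_zero hn
  have bernoulli : (1 : ℝ) / 2 ≤ dyadicRadius (m + 1) ^ 2 ^ m := by
    have h := one_add_mul_sub_le_pow (a := dyadicRadius (m + 1))
      (by linarith [dyadicRadius_nonneg (m + 1)]) (2 ^ m)
    refine le_trans (le_of_eq ?_) h
    rw [← neg_sub 1 (dyadicRadius _), one_sub_dyadicRadius]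
    have : (2 : ℝ) ^ m * (1 / 2) ^ (m + 1) = 1 / 2 := by
      rw [pow_succ, ← mul_assoc, ← mul_pow]; norm_num
    push_cast
    linarith
  calc (1 / 4 : ℝ) ^ c = (1 / 2) ^ (2 * c) := by rw [pow_mul]; norm_num
    _ ≤ (dyadicRadius (m + 1) ^ 2 ^ m) ^ (2 * c) := by gcongr
    _ = dyadicRadius (m + 1) ^ (c * 2 ^ (m + 1)) := by rw [← pow_mul]; ring_nf
    _ ≤ dyadicRadius (m + 1) ^ k :=
      pow_le_pow_of_le_one (dyadicRadius_nonneg _) (dyadicRadius_lt_one _).le hk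

lemma dyadicRadius_succ_pow_le_exp {n j k : ℕ} (hj : j ≤ n) (hk : 2 ^ n ≤ k + 1) :
    dyadicRadius (j + 1) ^ k ≤ 2 * rexp (-(2 ^ (n - j) / 2)) := by
  have hexp : dyadicRadius (j + 1) ^ (k + 1) ≤ rexp (-(2 ^ (n - j) / 2)) := by
    refine (dyadicRadius_pow_le_exp _ _).trans (Real.exp_le_exp.2 (neg_le_neg ?_))
    calc (2 : ℝ) ^ (n - j) / 2 = 2 ^ (n - j) * (2 * (1 / 2)) ^ j / 2 := by norm_num
      _ = 2 ^ (n - j + j) * (1 / 2) ^ (j + 1) := by rw [mul_pow, pow_add, pow_succ]; ring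
      _ = ((2 ^ n : ℕ) : ℝ) * (1 / 2) ^ (j + 1) := by rw [Nat.sub_add_cancel hj]; push_cast; rfl
      _ ≤ ((k + 1 : ℕ) : ℝ) * (1 / 2) ^ (j + 1) := by gcongr
  have half_le := half_le_dyadicRadius j.succ_ne_zero
  have : dyadicRadius (j + 1) ^ k * (1 / 2) ≤ dyadicRadius (j + 1) ^ (k + 1) := by
    rw [pow_succ]
    exact mul_le_mul_of_nonneg_left half_le (pow_nonneg (dyadicRadius_nonneg _) k)
  linarith

lemma iUnion_Ico_dyadicRadius :
    ⋃ j, Ico (dyadicRadius j) (dyadicRadius (j + 1)) = Ico (0 : ℝ) 1 := by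
  refine Subset.antisymm (iUnion_subset fun j x hx ↦
    ⟨(dyadicRadius_nonneg j).trans hx.1, hx.2.trans (dyadicRadius_lt_one _)⟩) fun x hx ↦ ?_
  obtain ⟨j, hj⟩ := exists_pow_lt_of_lt_one (sub_pos.2 hx.2) (by norm_num : (1 : ℝ) / 2 < 1)
  have hxj : x ∈ Ico (dyadicRadius 0) (dyadicRadius j) :=
    ⟨by simpa using hx.1, by simp only [dyadicRadius]; linarith⟩
  obtain ⟨i, -, hi⟩ := mem_iUnion₂.1 (Ico_subset_biUnion_Ico j dyadicRadius hxj)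
  exact mem_iUnion.2 ⟨i, hi⟩

end DyadicRadius

section DyadicRegular

/-- `τ` is doubling with constant `D`, and decays geometrically with ratio `ρ < 1` up to the
constant `A`. The dyadic tails of a weight in `𝒟 = D̂ ∩ Ď` have these two properties. -/
structure IsDyadicRegular (τ : ℕ → ℝ≥0∞) (D A ρ : ℝ≥0) : Prop where
  le_mul_succ : ∀ j, τ j ≤ D * τ (j + 1)
  le_mul_pow : ∀ j i, τ (j + i) ≤ A * ρ ^ i * τ j
  ratio_lt_one : ρ < 1

variable {τ : ℕ → ℝ≥0∞} {D A ρ l : ℝ≥0}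

lemma exists_geometric_decay_of_le_mul {m : ℕ} {q : ℝ≥0} (hτ : Antitone τ) (hm : m ≠ 0)
    (hq₀ : q ≠ 0) (hq₁ : q < 1) (h : ∀ j, τ (j + m) ≤ q * τ j) :
    ∃ A ρ : ℝ≥0, ρ < 1 ∧ ∀ j i, τ (j + i) ≤ A * ρ ^ i * τ j := by
  obtain ⟨ρ, hρ₁, hρ⟩ : ∃ ρ : ℝ≥0, ρ < 1 ∧ ρ ^ m = q :=
    ⟨q ^ (m⁻¹ : ℝ), NNReal.rpow_lt_one hq₁ (by positivity), NNReal.rpow_inv_natCast_pow q hm⟩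
  refine ⟨q⁻¹, ρ, hρ₁, fun j i ↦ ?_⟩
  have iterate (a : ℕ) : τ (j + m * a) ≤ q ^ a * τ j := by
    induction a with
    | zero => simp
    | succ a ih =>
      calc τ (j + m * (a + 1)) = τ (j + m * a + m) := by rw [mul_add, mul_one, add_assoc]
        _ ≤ q * τ (j + m * a) := h _
        _ ≤ q * (q ^ a * τ j) := by gcongr
        _ = q ^ (a + 1) * τ j := by rw [pow_succ']; ring
  have hpow : q ^ (i / m) ≤ q⁻¹ * ρ ^ i := by
    have hmod : q ≤ ρ ^ (i % m) :=
      hρ ▸ pow_le_pow_of_le_one zero_le hρ₁.le (Nat.mod_lt i (Nat.pos_of_ne_zero hm)).le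
    calc q ^ (i / m) = q⁻¹ * (q ^ (i / m) * q) := by field_simp
      _ ≤ q⁻¹ * (q ^ (i / m) * ρ ^ (i % m)) := by gcongr
      _ = q⁻¹ * ρ ^ i := by rw [← hρ, ← pow_mul, ← pow_add, Nat.div_add_mod]
  calc τ (j + i) ≤ τ (j + m * (i / m)) := hτ (by gcongr; exact Nat.mul_div_le i m)
    _ ≤ q ^ (i / m) * τ j := iterate _
    _ ≤ (q⁻¹ : ℝ≥0) * ρ ^ i * τ j := by gcongr; exact_mod_cast hpow

lemma summable_pow_mul_exp_neg_two_pow {x : ℝ} (hx : x ≠ 0) :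
    Summable fun d : ℕ ↦ x ^ d * rexp (-(2 ^ d / 2)) := by
  have hratio (d : ℕ) : ‖x ^ (d + 1) * rexp (-(2 ^ (d + 1) / 2))‖ / ‖x ^ d * rexp (-(2 ^ d / 2))‖ =
      |x| * rexp (-(2 ^ d / 2)) := by
    have : rexp (-(2 ^ (d + 1) / 2)) = rexp (-(2 ^ d / 2)) * rexp (-(2 ^ d / 2)) := by
      rw [← Real.exp_add]; ring_nf
    rw [this, pow_succ]
    simp only [norm_mul, norm_pow, Real.norm_eq_abs, Real.abs_exp]
    field_simp
  refine summable_of_ratio_test_tendsto_lt_one one_pos (.of_forall fun d ↦ by positivity) ?_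
  simp only [hratio]
  rw [← mul_zero |x|]
  refine (Real.tendsto_exp_neg_atTop_nhds_zero.comp ?_).const_mul _
  exact (tendsto_pow_atTop_atTop_of_one_lt one_lt_two).atTop_div_const two_pos

namespace IsDyadicRegular

protected lemma pow_mul (h : IsDyadicRegular τ D A ρ) (hl : 1 ≤ l) (hlρ : l * ρ < 1) :
    IsDyadicRegular (fun j ↦ l ^ j * τ j) D A (l * ρ) where
  le_mul_succ j :=
    calc (l : ℝ≥0∞) ^ j * τ j ≤ l ^ (j + 1) * (D * τ (j + 1)) :=
          mul_le_mul' (pow_le_pow_right₀ (by exact_mod_cast hl) j.le_succ) (h.le_mul_succ j)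
      _ = D * (l ^ (j + 1) * τ (j + 1)) := mul_left_comm _ _ _
  le_mul_pow j i :=
    calc (l : ℝ≥0∞) ^ (j + i) * τ (j + i) ≤ l ^ (j + i) * (A * ρ ^ i * τ j) := by
          gcongr; exact h.le_mul_pow j i
      _ = A * (l * ρ : ℝ≥0) ^ i * (l ^ j * τ j) := by push_cast; ring
  ratio_lt_one := hlρ

lemma le_pow_mul_add (h : IsDyadicRegular τ D A ρ) (j i : ℕ) : τ j ≤ D ^ i * τ (j + i) := by
  induction i with
  | zero => simp
  | succ i ih =>
    calc τ j ≤ D ^ i * τ (j + i) := ih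
      _ ≤ D ^ i * (D * τ (j + i + 1)) := by gcongr; exact h.le_mul_succ _
      _ = D ^ (i + 1) * τ (j + (i + 1)) := by rw [pow_succ, mul_assoc, add_assoc]

lemma exists_tsum_add_le (h : IsDyadicRegular τ D A ρ) :
    ∃ C : ℝ≥0, ∀ n, ∑' i, τ (i + n) ≤ C * τ n := by
  refine ⟨A * (1 - ρ)⁻¹, fun n ↦ ?_⟩
  calc ∑' i, τ (i + n) ≤ ∑' i, A * ρ ^ i * τ n :=
        ENNReal.tsum_le_tsum fun i ↦ add_comm i n ▸ h.le_mul_pow n i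
    _ = A * (1 - ρ : ℝ≥0∞)⁻¹ * τ n := by
        rw [ENNReal.tsum_mul_right, ENNReal.tsum_mul_left, ENNReal.tsum_geometric]
    _ = (A * (1 - ρ)⁻¹ : ℝ≥0) * τ n := by
        rw [ENNReal.coe_mul, ENNReal.coe_inv (tsub_pos_of_lt h.ratio_lt_one).ne', ENNReal.coe_sub,
          ENNReal.coe_one]

lemma exists_sum_mul_dyadicRadius_pow_le (h : IsDyadicRegular τ D A ρ) :
    ∃ C : ℝ≥0, ∀ n k : ℕ, 2 ^ n ≤ k + 1 →
      ∑ j ∈ Finset.range (n + 1), τ j * .ofReal (dyadicRadius (j + 1) ^ k) ≤ C * τ n := by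
  set g : ℕ → ℝ≥0∞ := fun d ↦ .ofReal ((D + 1 : ℝ) ^ d * (2 * rexp (-(2 ^ d / 2)))) with hg
  have hg_ne_top : ∑' d, g d ≠ ∞ := by
    have hsum := (summable_pow_mul_exp_neg_two_pow (x := D + 1) (by positivity)).mul_left 2
    simp only [mul_left_comm (2 : ℝ)] at hsum
    exact hsum.tsum_ofReal_ne_top
  refine ⟨(∑' d, g d).toNNReal, fun n k hk ↦ ?_⟩
  have hterm {j : ℕ} (hj : j ≤ n) :
      τ j * .ofReal (dyadicRadius (j + 1) ^ k) ≤ g (n - j) * τ n := by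
    have hτ : τ j ≤ .ofReal ((D + 1 : ℝ) ^ (n - j)) * τ n := by
      rw [ENNReal.ofReal_pow (by positivity), ← NNReal.coe_one, ← NNReal.coe_add,
        ENNReal.ofReal_coe_nnreal]
      refine (h.le_pow_mul_add j (n - j)).trans ?_
      rw [Nat.add_sub_cancel' hj]
      gcongr
      simp
    calc τ j * .ofReal (dyadicRadius (j + 1) ^ k)
        ≤ .ofReal ((D + 1 : ℝ) ^ (n - j)) * τ n *
            .ofReal (2 * rexp (-(2 ^ (n - j) / 2))) := by
          gcongr; exact dyadicRadius_succ_pow_le_exp hj hk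
      _ = g (n - j) * τ n := by
          simp only [hg]
          rw [mul_right_comm, ← ENNReal.ofReal_mul (by positivity)]
  calc ∑ j ∈ Finset.range (n + 1), τ j * .ofReal (dyadicRadius (j + 1) ^ k)
      ≤ ∑ j ∈ Finset.range (n + 1), g (n - j) * τ n :=
        Finset.sum_le_sum fun j hj ↦ hterm (Nat.lt_succ_iff.1 (Finset.mem_range.1 hj))
    _ = (∑ d ∈ Finset.range (n + 1), g d) * τ n := by
        rw [← Finset.sum_mul, Finset.sum_flip]
    _ ≤ (∑' d, g d).toNNReal * τ n := by
        rw [ENNReal.coe_toNNReal hg_ne_top]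
        gcongr
        exact ENNReal.sum_le_tsum _

lemma exists_tsum_mul_dyadicRadius_pow_le (h : IsDyadicRegular τ D A ρ) :
    ∃ C : ℝ≥0, ∀ n k : ℕ, 2 ^ n ≤ k + 1 →
      ∑' j, τ j * .ofReal (dyadicRadius (j + 1) ^ k) ≤ C * τ n := by
  obtain ⟨C₁, hC₁⟩ := h.exists_sum_mul_dyadicRadius_pow_le
  obtain ⟨C₂, hC₂⟩ := h.exists_tsum_add_le
  refine ⟨C₁ + C₂ * A * ρ, fun n k hk ↦ ?_⟩
  have htail : ∑' i, τ (i + (n + 1)) * .ofReal (dyadicRadius (i + (n + 1) + 1) ^ k) ≤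
      C₂ * (A * ρ * τ n) :=
    calc _ ≤ ∑' i, τ (i + (n + 1)) := ENNReal.tsum_le_tsum fun i ↦
          mul_le_of_le_one_right' (ENNReal.ofReal_le_one.2
            (pow_le_one₀ (dyadicRadius_nonneg _) (dyadicRadius_lt_one _).le))
      _ ≤ C₂ * τ (n + 1) := hC₂ _
      _ ≤ C₂ * (A * ρ * τ n) := by
          gcongr; simpa using h.le_mul_pow n 1
  rw [← ENNReal.summable.sum_add_tsum_nat_add' (k := n + 1)]
  calc _ ≤ C₁ * τ n + C₂ * (A * ρ * τ n) := add_le_add (hC₁ n k hk) htail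
    _ = (C₁ + C₂ * A * ρ : ℝ≥0) * τ n := by push_cast; ring

end IsDyadicRegular

end DyadicRegular

section RadialMeasure

variable {μ : Measure ℝ} {D A ρ : ℝ≥0}

/-- The mass `μ([1 - 2⁻ʲ, 1))`, the measure counterpart of the tail integral
`ω̂(1 - 2⁻ʲ)`. -/
def dyadicTail (μ : Measure ℝ) (j : ℕ) : ℝ≥0∞ := μ (Ico (dyadicRadius j) 1)

/-- The moment `∫₀¹ xᵏ dμ(x)`, with values in `[0, ∞]`. -/
def lmoment (μ : Measure ℝ) (k : ℕ) : ℝ≥0∞ := ∫⁻ x in Ico 0 1, .ofReal x ^ k ∂μ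

lemma dyadicTail_antitone (μ : Measure ℝ) : Antitone (dyadicTail μ) := fun _ _ h ↦
  measure_mono (Ico_subset_Ico_left (dyadicRadius_mono h))

lemma monotone_ofReal_pow (k : ℕ) : Monotone fun x : ℝ ↦ ENNReal.ofReal x ^ k := fun _ _ h ↦
  pow_le_pow_left' (ENNReal.ofReal_le_ofReal h) k

lemma lintegral_Ico_zero_one_eq_tsum (μ : Measure ℝ) (F : ℝ → ℝ≥0∞) :
    ∫⁻ x in Ico 0 1, F x ∂μ =
      ∑' j, ∫⁻ x in Ico (dyadicRadius j) (dyadicRadius (j + 1)), F x ∂μ := by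
  rw [← iUnion_Ico_dyadicRadius]
  exact lintegral_iUnion (fun _ ↦ measurableSet_Ico)
    dyadicRadius_mono.pairwise_disjoint_on_Ico_succ F

lemma tsum_lintegral_Ico_dyadicRadius_add_le (μ : Measure ℝ) (F : ℝ → ℝ≥0∞) (m : ℕ) :
    ∑' j, ∫⁻ x in Ico (dyadicRadius j) (dyadicRadius (j + m)), F x ∂μ ≤
      m * ∫⁻ x in Ico 0 1, F x ∂μ := by
  induction m with
  | zero => simp
  | succ m ih =>
    have hunion (j : ℕ) := Ico_union_Ico_eq_Ico
      (dyadicRadius_mono (Nat.le_add_right j m)) (dyadicRadius_mono (Nat.le_succ (j + m)))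
    calc ∑' j, ∫⁻ x in Ico (dyadicRadius j) (dyadicRadius (j + (m + 1))), F x ∂μ
        ≤ ∑' j, ((∫⁻ x in Ico (dyadicRadius j) (dyadicRadius (j + m)), F x ∂μ) +
            ∫⁻ x in Ico (dyadicRadius (j + m)) (dyadicRadius (j + m + 1)), F x ∂μ) :=
          ENNReal.tsum_le_tsum fun j ↦ hunion j ▸ lintegral_union_le _ _ _
      _ ≤ m * ∫⁻ x in Ico 0 1, F x ∂μ + ∫⁻ x in Ico 0 1, F x ∂μ := by
          rw [ENNReal.tsum_add]
          refine add_le_add ih ((ENNReal.tsum_comp_le_tsum_of_injective (add_left_injective m)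
            fun j ↦ ∫⁻ x in Ico (dyadicRadius j) (dyadicRadius (j + 1)), F x ∂μ).trans_eq ?_)
          rw [lintegral_Ico_zero_one_eq_tsum]
      _ = (m + 1 : ℕ) * ∫⁻ x in Ico 0 1, F x ∂μ := by push_cast; ring

variable {G : ℝ → ℝ≥0∞}

lemma lintegral_le_tsum_mul_dyadicTail (μ : Measure ℝ) (hG : MonotoneOn G (Ico 0 1)) :
    ∫⁻ x in Ico 0 1, G x ∂μ ≤ ∑' j, G (dyadicRadius (j + 1)) * dyadicTail μ j := by
  rw [lintegral_Ico_zero_one_eq_tsum]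
  refine ENNReal.tsum_le_tsum fun j ↦ ?_
  calc ∫⁻ x in Ico (dyadicRadius j) (dyadicRadius (j + 1)), G x ∂μ
      ≤ ∫⁻ _ in Ico (dyadicRadius j) (dyadicRadius (j + 1)), G (dyadicRadius (j + 1)) ∂μ :=
        setLIntegral_mono' measurableSet_Ico fun x hx ↦
          hG ⟨(dyadicRadius_nonneg j).trans hx.1, hx.2.trans (dyadicRadius_lt_one _)⟩
            (dyadicRadius_mem_Ico _) hx.2.le
    _ = G (dyadicRadius (j + 1)) * μ (Ico (dyadicRadius j) (dyadicRadius (j + 1))) :=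
        setLIntegral_const _ _
    _ ≤ G (dyadicRadius (j + 1)) * dyadicTail μ j :=
        mul_le_mul_right (measure_mono (Ico_subset_Ico_right (dyadicRadius_lt_one _).le)) _

lemma mul_measure_Ico_le_setLIntegral (μ : Measure ℝ) (hG : MonotoneOn G (Ico 0 1)) (j : ℕ)
    {b : ℝ} (hb : b ≤ 1) :
    G (dyadicRadius j) * μ (Ico (dyadicRadius j) b) ≤ ∫⁻ x in Ico (dyadicRadius j) b, G x ∂μ := by
  rw [← setLIntegral_const]
  exact setLIntegral_mono' measurableSet_Ico fun x hx ↦ hG (dyadicRadius_mem_Ico j)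
    ⟨(dyadicRadius_nonneg j).trans hx.1, hx.2.trans_le hb⟩ hx.1

lemma exists_dyadicTail_le_two_mul_measure_Ico (hμ : μ (Ico 0 1) ≠ ∞)
    (h : IsDyadicRegular (dyadicTail μ) D A ρ) :
    ∃ m : ℕ, ∀ j, dyadicTail μ j ≤ 2 * μ (Ico (dyadicRadius j) (dyadicRadius (j + m))) := by
  obtain ⟨m, hm⟩ : ∃ m : ℕ, A * ρ ^ m ≤ 1 / 2 := by
    have hlim : Tendsto (fun m : ℕ ↦ A * ρ ^ m) atTop (𝓝 (A * 0)) :=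
      (NNReal.tendsto_pow_atTop_nhds_zero_of_lt_one h.ratio_lt_one).const_mul A
    rw [mul_zero] at hlim
    exact (hlim.eventually_le_const (by positivity)).exists
  refine ⟨m, fun j ↦ ?_⟩
  set t := μ (Ico (dyadicRadius j) (dyadicRadius (j + m)))
  have hfin : dyadicTail μ j ≠ ∞ :=
    ne_top_of_le_ne_top hμ (measure_mono (Ico_subset_Ico_left (dyadicRadius_nonneg j)))
  have hsplit : dyadicTail μ j ≤ t + dyadicTail μ j / 2 :=
    calc dyadicTail μ j ≤ t + dyadicTail μ (j + m) := by
          rw [dyadicTail, ← Ico_union_Ico_eq_Ico (dyadicRadius_mono (Nat.le_add_right j m))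
            (dyadicRadius_lt_one _).le]
          exact measure_union_le _ _
      _ ≤ t + dyadicTail μ j / 2 := by
          gcongr
          refine (h.le_mul_pow j m).trans ?_
          rw [ENNReal.div_eq_inv_mul]
          gcongr
          simpa using ENNReal.coe_le_coe.2 hm
  have half_le : dyadicTail μ j / 2 ≤ t := by
    rw [← ENNReal.sub_half hfin]
    exact tsub_le_iff_right.2 hsplit
  rw [mul_comm]
  exact (ENNReal.div_le_iff two_ne_zero ENNReal.ofNat_ne_top).1 half_le

lemma exists_tsum_mul_dyadicTail_le (hμ : μ (Ico 0 1) ≠ ∞)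
    (h : IsDyadicRegular (dyadicTail μ) D A ρ) :
    ∃ C : ℝ≥0, ∀ G : ℝ → ℝ≥0∞, MonotoneOn G (Ico 0 1) →
      ∑' j, G (dyadicRadius j) * dyadicTail μ j ≤ C * ∫⁻ x in Ico 0 1, G x ∂μ := by
  obtain ⟨m, hm⟩ := exists_dyadicTail_le_two_mul_measure_Ico hμ h
  refine ⟨2 * m, fun G hG ↦ ?_⟩
  calc ∑' j, G (dyadicRadius j) * dyadicTail μ j
      ≤ ∑' j, 2 * ∫⁻ x in Ico (dyadicRadius j) (dyadicRadius (j + m)), G x ∂μ := by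
        refine ENNReal.tsum_le_tsum fun j ↦ ?_
        calc _ ≤ G (dyadicRadius j) * (2 * μ (Ico (dyadicRadius j) (dyadicRadius (j + m)))) :=
              mul_le_mul_right (hm j) _
          _ ≤ _ := by
              rw [mul_left_comm]
              exact mul_le_mul_right
                (mul_measure_Ico_le_setLIntegral μ hG j (dyadicRadius_lt_one _).le) _
    _ ≤ (2 * m : ℝ≥0) * ∫⁻ x in Ico 0 1, G x ∂μ := by
        rw [ENNReal.tsum_mul_left]
        push_cast
        rw [mul_assoc]
        gcongr
        exact tsum_lintegral_Ico_dyadicRadius_add_le μ G m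

lemma two_pow_log_succ_le (k : ℕ) : 2 ^ Nat.log 2 (k + 1) ≤ k + 1 :=
  Nat.pow_log_le_self 2 k.succ_ne_zero

lemma exists_lmoment_le_mul_dyadicTail (h : IsDyadicRegular (dyadicTail μ) D A ρ) :
    ∃ C : ℝ≥0, ∀ k, lmoment μ k ≤ C * dyadicTail μ (Nat.log 2 (k + 1)) := by
  obtain ⟨C, hC⟩ := h.exists_tsum_mul_dyadicRadius_pow_le
  refine ⟨C, fun k ↦ ?_⟩
  calc lmoment μ k ≤ ∑' j, ENNReal.ofReal (dyadicRadius (j + 1)) ^ k * dyadicTail μ j :=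
        lintegral_le_tsum_mul_dyadicTail μ ((monotone_ofReal_pow k).monotoneOn _)
    _ = ∑' j, dyadicTail μ j * ENNReal.ofReal (dyadicRadius (j + 1) ^ k) := by
        simp only [ENNReal.ofReal_pow (dyadicRadius_nonneg _), mul_comm]
    _ ≤ C * dyadicTail μ (Nat.log 2 (k + 1)) := hC _ _ (two_pow_log_succ_le k)

lemma dyadicTail_le_mul_lmoment (hD : ∀ j, dyadicTail μ j ≤ D * dyadicTail μ (j + 1)) (k : ℕ) :
    dyadicTail μ (Nat.log 2 (k + 1)) ≤ (4 * D : ℝ≥0) * lmoment μ k := by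
  set n := Nat.log 2 (k + 1)
  have hk : k ≤ 1 * 2 ^ (n + 1) := by
    have : k + 1 < 2 ^ (n + 1) := Nat.lt_pow_succ_log_self one_lt_two (k + 1)
    omega
  have hpow : (4 : ℝ≥0∞)⁻¹ ≤ .ofReal (dyadicRadius (n + 1)) ^ k := by
    have := ENNReal.ofReal_le_ofReal (one_fourth_pow_le_dyadicRadius_pow n.succ_ne_zero hk)
    rw [← ENNReal.ofReal_pow (dyadicRadius_nonneg _)]
    simpa [ENNReal.ofReal_inv_of_pos] using this
  have hmarkov : 4⁻¹ * dyadicTail μ (n + 1) ≤ lmoment μ k :=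
    calc 4⁻¹ * dyadicTail μ (n + 1)
        ≤ .ofReal (dyadicRadius (n + 1)) ^ k * dyadicTail μ (n + 1) := mul_le_mul_left hpow _
      _ ≤ ∫⁻ x in Ico (dyadicRadius (n + 1)) 1, ENNReal.ofReal x ^ k ∂μ :=
          mul_measure_Ico_le_setLIntegral μ ((monotone_ofReal_pow k).monotoneOn _) _ le_rfl
      _ ≤ lmoment μ k := lintegral_mono_set (Ico_subset_Ico_left (dyadicRadius_nonneg _))
  calc dyadicTail μ n ≤ D * dyadicTail μ (n + 1) := hD n
    _ = 4 * D * (4⁻¹ * dyadicTail μ (n + 1)) := by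
        rw [mul_comm 4, mul_assoc, ← mul_assoc 4,
          ENNReal.mul_inv_cancel (by norm_num) (by norm_num), one_mul]
    _ ≤ 4 * D * lmoment μ k := mul_le_mul_right hmarkov _
    _ = (4 * D : ℝ≥0) * lmoment μ k := by push_cast; rfl

end RadialMeasure

section DyadicBlock

/-- The `n`-th dyadic block of indices, `2ⁿ ≤ k + 1 < 2ⁿ⁺¹`. -/
def dyadicBlock (n : ℕ) : Finset ℕ := Finset.Ico (2 ^ n - 1) (2 ^ (n + 1) - 1)

lemma mem_dyadicBlock {n k : ℕ} : k ∈ dyadicBlock n ↔ 2 ^ n ≤ k + 1 ∧ k + 1 < 2 ^ (n + 1) := by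
  have := Nat.one_le_two_pow (n := n + 1)
  rw [dyadicBlock, Finset.mem_Ico]
  omega

lemma mem_dyadicBlock_iff_log_eq {n k : ℕ} : k ∈ dyadicBlock n ↔ Nat.log 2 (k + 1) = n := by
  rw [mem_dyadicBlock, Nat.log_eq_iff (.inr ⟨one_lt_two, k.succ_ne_zero⟩)]

lemma card_dyadicBlock (n : ℕ) : (dyadicBlock n).card = 2 ^ n := by
  have := Nat.one_le_two_pow (n := n)
  rw [dyadicBlock, Nat.card_Ico, pow_succ]
  omega

lemma tsum_eq_tsum_sum_dyadicBlock (g : ℕ → ℝ≥0∞) :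
    ∑' k, g k = ∑' n, ∑ k ∈ dyadicBlock n, g k := by
  have hblock (n : ℕ) :
      ∑ k ∈ dyadicBlock n, g k = ∑' k, if n = Nat.log 2 (k + 1) then g k else 0 := by
    rw [tsum_eq_sum (s := dyadicBlock n)]
    · exact Finset.sum_congr rfl fun k hk ↦ (if_pos (mem_dyadicBlock_iff_log_eq.1 hk).symm).symm
    · exact fun k hk ↦ if_neg fun h ↦ hk (mem_dyadicBlock_iff_log_eq.2 h.symm)
  simp only [hblock]
  rw [ENNReal.tsum_comm]
  simp only [tsum_ite_eq]

end DyadicBlock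

section PowerSeriesUpperBound

lemma rpow_sum_mul_le {ι : Type*} (s : Finset ι) {p : ℝ} (hp : 1 ≤ p) (w f : ι → ℝ≥0∞) :
    (∑ i ∈ s, w i * f i) ^ p ≤ (∑ i ∈ s, w i) ^ (p - 1) * ∑ i ∈ s, w i * f i ^ p := by
  have hp₀ : 0 < p := one_pos.trans_le hp
  calc (∑ i ∈ s, w i * f i) ^ p
      ≤ ((∑ i ∈ s, w i) ^ (1 - p⁻¹) * (∑ i ∈ s, w i * f i ^ p) ^ p⁻¹) ^ p :=
        ENNReal.rpow_le_rpow (ENNReal.inner_le_weight_mul_Lp_of_nonneg s hp w f) hp₀.le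
    _ = (∑ i ∈ s, w i) ^ (p - 1) * ∑ i ∈ s, w i * f i ^ p := by
        rw [ENNReal.mul_rpow_of_nonneg _ _ hp₀.le, ← ENNReal.rpow_mul,
          ENNReal.rpow_inv_rpow hp₀.ne', sub_mul, inv_mul_cancel₀ hp₀.ne', one_mul]

lemma rpow_tsum_mul_le {p : ℝ} (hp : 1 ≤ p) (w f : ℕ → ℝ≥0∞) :
    (∑' k, w k * f k) ^ p ≤ (∑' k, w k) ^ (p - 1) * ∑' k, w k * f k ^ p := by
  have hp₀ : 0 < p := one_pos.trans_le hp
  rw [← ENNReal.le_rpow_inv_iff hp₀]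
  refine ENNReal.tsum_le_of_sum_range_le fun n ↦ (ENNReal.le_rpow_inv_iff hp₀).2 ?_
  exact (rpow_sum_mul_le _ hp w f).trans (mul_le_mul'
    (ENNReal.rpow_le_rpow (ENNReal.sum_le_tsum _) (sub_nonneg.2 hp)) (ENNReal.sum_le_tsum _))

lemma mul_rpow_sub_one_le_rpow_sub_rpow {δ x : ℝ} (hδ₀ : 0 ≤ δ) (hδ₁ : δ ≤ 1) (hx : 0 ≤ x) :
    δ * (x + 1) ^ (δ - 1) ≤ (x + 1) ^ δ - x ^ δ := by
  have hx₁ : 0 < x + 1 := by positivity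
  have hxdiv : x / (x + 1) = 1 + -(1 / (x + 1)) := by field_simp; ring
  have bernoulli : (x / (x + 1)) ^ δ ≤ 1 + δ * -(1 / (x + 1)) := by
    rw [hxdiv]
    refine rpow_one_add_le_one_add_mul_self ?_ hδ₀ hδ₁
    rw [neg_le_neg_iff, div_le_one hx₁]
    linarith
  rw [Real.div_rpow hx hx₁.le, div_le_iff₀ (by positivity)] at bernoulli
  rw [Real.rpow_sub_one hx₁.ne']
  linear_combination bernoulli

lemma sum_range_rpow_sub_one_le {δ : ℝ} (hδ₀ : 0 < δ) (hδ₁ : δ ≤ 1) (n : ℕ) :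
    ∑ k ∈ Finset.range n, ((k : ℝ) + 1) ^ (δ - 1) ≤ δ⁻¹ * (n : ℝ) ^ δ := by
  rw [le_inv_mul_iff₀ hδ₀, Finset.mul_sum]
  calc ∑ k ∈ Finset.range n, δ * ((k : ℝ) + 1) ^ (δ - 1)
      ≤ ∑ k ∈ Finset.range n, (((k + 1 : ℕ) : ℝ) ^ δ - (k : ℝ) ^ δ) :=
        Finset.sum_le_sum fun k _ ↦ by
          push_cast
          exact mul_rpow_sub_one_le_rpow_sub_rpow hδ₀.le hδ₁ k.cast_nonneg
    _ = (n : ℝ) ^ δ := by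
        rw [Finset.sum_range_sub fun k : ℕ ↦ (k : ℝ) ^ δ, Nat.cast_zero, Real.zero_rpow hδ₀.ne',
          sub_zero]

lemma ofReal_natCast_add_one_rpow (k : ℕ) (s : ℝ) :
    ENNReal.ofReal (((k : ℝ) + 1) ^ s) = (k + 1 : ℝ≥0∞) ^ s := by
  rw [← ENNReal.ofReal_rpow_of_pos (by positivity)]
  norm_cast

lemma sum_range_pow_mul_rpow_le {δ : ℝ} (hδ₀ : 0 < δ) (hδ₁ : δ ≤ 1) {r : ℝ≥0∞} (hr : r ≤ 1)
    (n : ℕ) :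
    ∑ k ∈ Finset.range n, r ^ k * (k + 1 : ℝ≥0∞) ^ (δ - 1) ≤ δ.toNNReal⁻¹ * (n : ℝ≥0∞) ^ δ :=
  calc _ ≤ ∑ k ∈ Finset.range n, ENNReal.ofReal (((k : ℝ) + 1) ^ (δ - 1)) :=
        Finset.sum_le_sum fun k _ ↦ by
          rw [ofReal_natCast_add_one_rpow]
          exact mul_le_of_le_one_left' (pow_le_one' hr k)
    _ = ENNReal.ofReal (∑ k ∈ Finset.range n, ((k : ℝ) + 1) ^ (δ - 1)) :=
        (ENNReal.ofReal_sum_of_nonneg fun k _ ↦ by positivity).symm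
    _ ≤ ENNReal.ofReal (δ⁻¹ * (n : ℝ) ^ δ) :=
        ENNReal.ofReal_le_ofReal (sum_range_rpow_sub_one_le hδ₀ hδ₁ n)
    _ = δ.toNNReal⁻¹ * (n : ℝ≥0∞) ^ δ := by
        rw [ENNReal.ofReal_mul (by positivity), ← ENNReal.ofReal_rpow_of_nonneg (by positivity)
          hδ₀.le, ENNReal.ofReal_natCast, ENNReal.ofReal, Real.toNNReal_inv]

lemma tsum_ofReal_dyadicRadius_pow (j : ℕ) :
    ∑' k, ENNReal.ofReal (dyadicRadius j) ^ k = 2 ^ j := by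
  rw [ENNReal.tsum_geometric, ← ENNReal.ofReal_one, ← ENNReal.ofReal_sub _
    (dyadicRadius_nonneg _), one_sub_dyadicRadius, ← ENNReal.ofReal_inv_of_pos (by positivity),
    one_div, inv_pow, inv_inv, ENNReal.ofReal_pow (by norm_num), ENNReal.ofReal_ofNat]

lemma exists_tsum_dyadicRadius_pow_mul_rpow_le {δ : ℝ} (hδ₀ : 0 < δ) (hδ₁ : δ ≤ 1) :
    ∃ B : ℝ≥0, ∀ j, ∑' k : ℕ, ENNReal.ofReal (dyadicRadius (j + 1)) ^ k *
      (k + 1 : ℝ≥0∞) ^ (δ - 1) ≤ B * (2 ^ j : ℝ≥0∞) ^ δ := by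
  refine ⟨δ.toNNReal⁻¹ + 2, fun j ↦ ?_⟩
  set r := ENNReal.ofReal (dyadicRadius (j + 1)) with hr_def
  have hr : r ≤ 1 := ENNReal.ofReal_le_one.2 (dyadicRadius_lt_one _).le
  have hinitial : ∑ k ∈ Finset.range (2 ^ j), r ^ k * (k + 1 : ℝ≥0∞) ^ (δ - 1) ≤
      δ.toNNReal⁻¹ * (2 ^ j : ℝ≥0∞) ^ δ := by
    simpa using sum_range_pow_mul_rpow_le hδ₀ hδ₁ hr (2 ^ j)
  have htail : ∑' k : ℕ, r ^ (k + 2 ^ j) * ((k + 2 ^ j : ℕ) + 1 : ℝ≥0∞) ^ (δ - 1) ≤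
      2 * (2 ^ j : ℝ≥0∞) ^ δ :=
    calc _ ≤ ∑' k, r ^ k * (2 ^ j : ℝ≥0∞) ^ (δ - 1) := by
          refine ENNReal.tsum_le_tsum fun k ↦ mul_le_mul'
            (pow_le_pow_right_of_le_one' hr (Nat.le_add_right _ _)) ?_
          rw [← neg_sub 1 δ, ENNReal.rpow_neg, ENNReal.rpow_neg, ENNReal.inv_le_inv]
          gcongr
          exact_mod_cast (Nat.le_add_left _ _).trans (Nat.le_succ _)
      _ = 2 * (2 ^ j : ℝ≥0∞) ^ δ := by
          rw [ENNReal.tsum_mul_right, hr_def, tsum_ofReal_dyadicRadius_pow, pow_succ', mul_assoc,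
            ENNReal.rpow_sub _ _ (by simp) (by simp), ENNReal.rpow_one,
            ENNReal.mul_div_cancel (by simp) (by simp)]
  rw [← ENNReal.summable.sum_add_tsum_nat_add' (k := 2 ^ j)]
  refine (add_le_add hinitial htail).trans_eq ?_
  push_cast
  rw [add_mul]

lemma exists_two_rpow_mul_lt_one {ρ : ℝ≥0} (hρ : ρ < 1) (s : ℝ) :
    ∃ δ : ℝ, 0 < δ ∧ δ ≤ 1 ∧ (2 : ℝ≥0) ^ (δ * s) * ρ < 1 := by
  have hlim : Tendsto (fun δ : ℝ ↦ (2 : ℝ≥0) ^ (δ * s) * ρ) (𝓝 0) (𝓝 (2 ^ (0 * s) * ρ)) :=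
    (tendsto_const_nhds.nnrpow (tendsto_id.mul_const s) (.inl two_ne_zero)).mul_const ρ
  rw [zero_mul, NNReal.rpow_zero, one_mul] at hlim
  obtain ⟨δ, hδ, hδ₀, hδ₁⟩ := ((hlim.mono_left nhdsWithin_le_nhds).eventually_lt_const hρ |>.and
    (Ioo_mem_nhdsGT one_pos)).exists
  exact ⟨δ, hδ₀, hδ₁.le, hδ⟩

lemma exists_rpow_tsum_mul_dyadicRadius_pow_le {p δ : ℝ} (hp : 1 ≤ p) (hδ₀ : 0 < δ) (hδ₁ : δ ≤ 1) :
    ∃ B : ℝ≥0, ∀ (a : ℕ → ℝ≥0∞) (j : ℕ),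
      (∑' k, a k * ENNReal.ofReal (dyadicRadius (j + 1)) ^ k) ^ p ≤
        B * (2 ^ j : ℝ≥0∞) ^ (δ * (p - 1)) * ∑' k : ℕ, a k ^ p *
          (k + 1 : ℝ≥0∞) ^ ((1 - δ) * (p - 1)) * ENNReal.ofReal (dyadicRadius (j + 1)) ^ k := by
  obtain ⟨B, hB⟩ := exists_tsum_dyadicRadius_pow_mul_rpow_le hδ₀ hδ₁
  have hp₀ : 0 ≤ p := zero_le_one.trans hp
  have hp₁ : 0 ≤ p - 1 := sub_nonneg.2 hp
  refine ⟨B ^ (p - 1), fun a j ↦ ?_⟩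
  set r := ENNReal.ofReal (dyadicRadius (j + 1))
  have hadd (k : ℕ) (s t : ℝ) :
      (k + 1 : ℝ≥0∞) ^ s * (k + 1 : ℝ≥0∞) ^ t = (k + 1 : ℝ≥0∞) ^ (s + t) :=
    (ENNReal.rpow_add s t (by simp) (by simp)).symm
  calc (∑' k, a k * r ^ k) ^ p
      = (∑' k : ℕ, r ^ k * (k + 1 : ℝ≥0∞) ^ (δ - 1) *
          (a k * (k + 1 : ℝ≥0∞) ^ (1 - δ))) ^ p := by
        congr 1
        refine tsum_congr fun k ↦ ?_
        rw [mul_mul_mul_comm, mul_comm (_ ^ (δ - 1)), hadd, sub_add_sub_cancel, sub_self,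
          ENNReal.rpow_zero, mul_one, mul_comm]
    _ ≤ (∑' k : ℕ, r ^ k * (k + 1 : ℝ≥0∞) ^ (δ - 1)) ^ (p - 1) *
          ∑' k : ℕ, r ^ k * (k + 1 : ℝ≥0∞) ^ (δ - 1) * (a k * (k + 1 : ℝ≥0∞) ^ (1 - δ)) ^ p :=
        rpow_tsum_mul_le hp _ _
    _ ≤ (B * (2 ^ j : ℝ≥0∞) ^ δ) ^ (p - 1) *
          ∑' k : ℕ, a k ^ p * (k + 1 : ℝ≥0∞) ^ ((1 - δ) * (p - 1)) * r ^ k := by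
        refine mul_le_mul' (ENNReal.rpow_le_rpow (hB j) hp₁) (tsum_congr fun k ↦ ?_).le
        rw [ENNReal.mul_rpow_of_nonneg _ _ hp₀, ← ENNReal.rpow_mul, mul_mul_mul_comm,
          mul_comm (r ^ k), mul_assoc, mul_comm (r ^ k), hadd, mul_assoc]
        ring_nf
    _ = _ := by
        rw [ENNReal.mul_rpow_of_nonneg _ _ hp₁, ← ENNReal.rpow_mul,
          ENNReal.coe_rpow_of_nonneg _ hp₁]

variable {μ : Measure ℝ} {D A ρ : ℝ≥0}

lemma exists_tsum_two_pow_rpow_mul_dyadicTail_le (h : IsDyadicRegular (dyadicTail μ) D A ρ) {s : ℝ}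
    (hs : 0 ≤ s) (hsρ : (2 : ℝ≥0) ^ s * ρ < 1) :
    ∃ C : ℝ≥0, ∀ k : ℕ, ∑' j, (2 ^ j : ℝ≥0∞) ^ s * dyadicTail μ j *
      ENNReal.ofReal (dyadicRadius (j + 1)) ^ k ≤ C * ((k + 1 : ℝ≥0∞) ^ s * lmoment μ k) := by
  have hpow (j : ℕ) : (2 ^ j : ℝ≥0∞) ^ s = ((2 ^ s : ℝ≥0) : ℝ≥0∞) ^ j := by
    rw [ENNReal.coe_rpow_of_nonneg _ hs, ENNReal.coe_ofNat, ← ENNReal.rpow_natCast_mul, mul_comm,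
      ENNReal.rpow_mul_natCast]
  obtain ⟨C, hC⟩ := (h.pow_mul (NNReal.one_le_rpow one_le_two hs)
    hsρ).exists_tsum_mul_dyadicRadius_pow_le
  refine ⟨C * (4 * D), fun k ↦ ?_⟩
  calc ∑' j, (2 ^ j : ℝ≥0∞) ^ s * dyadicTail μ j * ENNReal.ofReal (dyadicRadius (j + 1)) ^ k
      ≤ C * ((2 ^ Nat.log 2 (k + 1) : ℝ≥0∞) ^ s * dyadicTail μ (Nat.log 2 (k + 1))) := by
        simp only [hpow, ← ENNReal.ofReal_pow (dyadicRadius_nonneg _)]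
        exact hC _ k (two_pow_log_succ_le k)
    _ ≤ C * ((k + 1 : ℝ≥0∞) ^ s * ((4 * D : ℝ≥0) * lmoment μ k)) := by
        gcongr
        · exact_mod_cast two_pow_log_succ_le k
        · exact dyadicTail_le_mul_lmoment h.le_mul_succ k
    _ = (C * (4 * D) : ℝ≥0) * ((k + 1 : ℝ≥0∞) ^ s * lmoment μ k) := by push_cast; ring

theorem exists_lintegral_rpow_tsum_le (h : IsDyadicRegular (dyadicTail μ) D A ρ) {p : ℝ}
    (hp : 1 ≤ p) :
    ∃ C : ℝ≥0, ∀ a : ℕ → ℝ≥0∞, ∫⁻ x in Ico 0 1, (∑' k, a k * ENNReal.ofReal x ^ k) ^ p ∂μ ≤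
      C * ∑' k : ℕ, a k ^ p * (k + 1 : ℝ≥0∞) ^ (p - 1) * lmoment μ k := by
  obtain ⟨δ, hδ₀, hδ₁, hδρ⟩ := exists_two_rpow_mul_lt_one h.ratio_lt_one (p - 1)
  obtain ⟨B, hB⟩ := exists_rpow_tsum_mul_dyadicRadius_pow_le hp hδ₀ hδ₁
  obtain ⟨C, hC⟩ := exists_tsum_two_pow_rpow_mul_dyadicTail_le h
    (mul_nonneg hδ₀.le (sub_nonneg.2 hp)) hδρ
  refine ⟨B * C, fun a ↦ ?_⟩
  have hmono : Monotone fun x : ℝ ↦ (∑' k, a k * ENNReal.ofReal x ^ k) ^ p := fun x y hxy ↦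
    ENNReal.rpow_le_rpow (ENNReal.tsum_le_tsum fun k ↦
      mul_le_mul_right (monotone_ofReal_pow k hxy) _) (zero_le_one.trans hp)
  set c : ℕ → ℝ≥0∞ := fun k ↦ a k ^ p * (k + 1 : ℝ≥0∞) ^ ((1 - δ) * (p - 1)) with hc
  have hc_mul (k : ℕ) : c k * (k + 1 : ℝ≥0∞) ^ (δ * (p - 1)) =
      a k ^ p * (k + 1 : ℝ≥0∞) ^ (p - 1) := by
    rw [hc, mul_assoc, ← ENNReal.rpow_add _ _ (by simp) (by simp), ← add_mul, sub_add_cancel,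
      one_mul]
  calc ∫⁻ x in Ico 0 1, (∑' k, a k * ENNReal.ofReal x ^ k) ^ p ∂μ
      ≤ ∑' j, (∑' k, a k * ENNReal.ofReal (dyadicRadius (j + 1)) ^ k) ^ p * dyadicTail μ j :=
        lintegral_le_tsum_mul_dyadicTail μ (hmono.monotoneOn _)
    _ ≤ ∑' j, ∑' k, B * (c k * ((2 ^ j : ℝ≥0∞) ^ (δ * (p - 1)) * dyadicTail μ j *
          ENNReal.ofReal (dyadicRadius (j + 1)) ^ k)) := by
        refine ENNReal.tsum_le_tsum fun j ↦ (mul_le_mul_left (hB a j) _).trans_eq ?_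
        rw [mul_right_comm, ← ENNReal.tsum_mul_left]
        exact tsum_congr fun k ↦ by ring
    _ = B * ∑' k, c k * ∑' j, (2 ^ j : ℝ≥0∞) ^ (δ * (p - 1)) * dyadicTail μ j *
          ENNReal.ofReal (dyadicRadius (j + 1)) ^ k := by
        rw [ENNReal.tsum_comm]
        simp only [ENNReal.tsum_mul_left]
    _ ≤ B * ∑' k, C * (a k ^ p * (k + 1 : ℝ≥0∞) ^ (p - 1) * lmoment μ k) := by
        refine mul_le_mul_right (ENNReal.tsum_le_tsum fun k ↦ ?_) _
        refine (mul_le_mul_right (hC k) _).trans_eq ?_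
        rw [← hc_mul]
        ring
    _ = (B * C : ℝ≥0) * ∑' k : ℕ, a k ^ p * (k + 1 : ℝ≥0∞) ^ (p - 1) * lmoment μ k := by
        rw [ENNReal.tsum_mul_left, ← mul_assoc, ENNReal.coe_mul]

end PowerSeriesUpperBound

section CircleAverage

variable {a : ℕ → ℂ}

lemma sum_range_sq_norm_eq_circleAverage (a : ℕ → ℂ) (N : ℕ) :
    ∑ k ∈ Finset.range N, ‖a k‖ ^ 2 =
      circleAverage (fun z ↦ ‖∑ k ∈ Finset.range N, a k * z ^ k‖ ^ 2) 0 1 := by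
  let P : Polynomial ℂ := ∑ k ∈ Finset.range N, Polynomial.monomial k (a k)
  have coeff_P (k : ℕ) : P.coeff k = if k < N then a k else 0 := by
    simp [P, Polynomial.finsetSum_coeff, Polynomial.coeff_monomial]
  have support_P : P.support ⊆ Finset.range N := fun k hk ↦ by
    by_contra hkN
    rw [Polynomial.mem_support_iff, coeff_P, if_neg (by simpa using hkN)] at hk
    exact hk rfl
  have eval_P (z : ℂ) : P.eval z = ∑ k ∈ Finset.range N, a k * z ^ k := by
    simp [P, Polynomial.eval_finsetSum]
  simp only [← eval_P]
  rw [← Polynomial.sum_sq_norm_coeff_eq_circleAverage, Finset.sum_subset support_P fun k _ hk ↦ by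
    rw [Polynomial.notMem_support_iff.1 hk, norm_zero, zero_pow two_ne_zero]]
  exact Finset.sum_congr rfl fun k hk ↦ by rw [coeff_P, if_pos (Finset.mem_range.1 hk)]

theorem hasSum_sq_norm_circleAverage (ha : Summable fun k ↦ ‖a k‖) :
    HasSum (fun k ↦ ‖a k‖ ^ 2) (circleAverage (fun z ↦ ‖∑' k, a k * z ^ k‖ ^ 2) 0 1) := by
  have norm_term (θ : ℝ) (k : ℕ) : ‖a k * circleMap 0 1 θ ^ k‖ = ‖a k‖ := by simp
  have hsum (θ : ℝ) : Summable fun k ↦ a k * circleMap 0 1 θ ^ k :=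
    .of_norm (by simpa only [norm_term] using ha)
  rw [hasSum_iff_tendsto_nat_of_nonneg fun _ ↦ by positivity]
  simp only [sum_range_sq_norm_eq_circleAverage, circleAverage_def]
  refine (intervalIntegral.tendsto_integral_filter_of_dominated_convergence
    (fun _ ↦ (∑' k, ‖a k‖) ^ 2) ?_ ?_ intervalIntegrable_const ?_).const_smul _
  · refine .of_forall fun N ↦ Continuous.aestronglyMeasurable ?_
    fun_prop
  · refine .of_forall fun N ↦ .of_forall fun θ _ ↦ ?_
    rw [Real.norm_of_nonneg (by positivity)]
    gcongr
    calc ‖∑ k ∈ Finset.range N, a k * circleMap 0 1 θ ^ k‖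
        ≤ ∑ k ∈ Finset.range N, ‖a k‖ := norm_sum_le_of_le _ fun k _ ↦ (norm_term θ k).le
      _ ≤ ∑' k, ‖a k‖ := ha.sum_le_tsum _ fun _ _ ↦ norm_nonneg _
  · exact .of_forall fun θ _ ↦ ((hsum θ).hasSum.tendsto_sum_nat.norm).pow 2

end CircleAverage

section MaclaurinSeries

variable {f : ℂ → ℂ} {R r : ℝ}

lemma coefF_deriv (f : ℂ → ℂ) (k : ℕ) : coefF (deriv f) k = (k + 1) * coefF f (k + 1) := by
  have : (k + 1 : ℂ) ≠ 0 := Nat.cast_add_one_ne_zero k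
  simp only [coefF, iteratedDeriv_succ', Nat.factorial_succ, Nat.cast_mul, Nat.cast_succ]
  field_simp

lemma hasSum_coefF_mul_pow (hf : DifferentiableOn ℂ f (ball 0 R)) {z : ℂ} (hz : z ∈ ball 0 R) :
    HasSum (fun k ↦ coefF f k * z ^ k) (f z) := by
  have hterm (k : ℕ) :
      coefF f k * z ^ k = (k.factorial : ℂ)⁻¹ • (z - 0) ^ k • iteratedDeriv k f 0 := by
    simp only [coefF, sub_zero, smul_eq_mul]
    ring
  simpa only [hterm] using Complex.hasSum_taylorSeries_on_ball hf hz

lemma summable_norm_coefF_mul_pow (hf : DifferentiableOn ℂ f (ball 0 R)) (hr₀ : 0 ≤ r)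
    (hr : r < R) : Summable fun k ↦ ‖coefF f k * (r : ℂ) ^ k‖ :=
  (hasSum_coefF_mul_pow hf (z := r) (by simpa [abs_of_nonneg hr₀])).summable.norm

lemma circleMap_zero_mem_ball (hr₀ : 0 ≤ r) (hr : r < R) (θ : ℝ) : circleMap 0 r θ ∈ ball 0 R :=
  mem_ball.2 ((circleMap_mem_sphere 0 hr₀ θ).trans_lt hr)

lemma hasSum_sq_norm_coefF (hf : DifferentiableOn ℂ f (ball 0 R)) (hr₀ : 0 ≤ r) (hr : r < R) :
    HasSum (fun k ↦ ‖coefF f k‖ ^ 2 * r ^ (2 * k)) (circleAverage (fun z ↦ ‖f z‖ ^ 2) 0 r) := by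
  convert hasSum_sq_norm_circleAverage (summable_norm_coefF_mul_pow hf hr₀ hr) using 1
  · ext k
    rw [norm_mul, norm_pow, Complex.norm_of_nonneg hr₀, mul_pow, ← pow_mul, mul_comm 2]
  · simp only [circleAverage_def]
    congr 2 with θ
    rw [← (hasSum_coefF_mul_pow hf (circleMap_zero_mem_ball hr₀ hr θ)).tsum_eq]
    simp only [circleMap_zero, mul_pow, mul_assoc, Complex.ofReal_one, one_mul]

lemma lintegral_enorm_sq_circleMap (hf : DifferentiableOn ℂ f (ball 0 R)) (hr₀ : 0 ≤ r)
    (hr : r < R) :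
    ∫⁻ θ in Ioo (-π) π, ‖f (circleMap 0 r θ)‖ₑ ^ 2 =
      .ofReal (2 * π) * ∑' k, ‖coefF f k‖ₑ ^ 2 * .ofReal r ^ (2 * k) := by
  have hcont : Continuous fun θ ↦ ‖f (circleMap 0 r θ)‖ ^ 2 :=
    (hf.continuousOn.comp_continuous (continuous_circleMap 0 r)
      (circleMap_zero_mem_ball hr₀ hr)).norm.pow 2
  have hper : Function.Periodic (fun θ ↦ ‖f (circleMap 0 r θ)‖ ^ 2) (2 * π) := fun θ ↦ by
    simp only [periodic_circleMap 0 r θ]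
  have hint : ∫ θ in Ioo (-π) π, ‖f (circleMap 0 r θ)‖ ^ 2 =
      2 * π * circleAverage (fun z ↦ ‖f z‖ ^ 2) 0 r := by
    have := hper.intervalIntegral_add_eq (-π) 0
    rw [zero_add, show -π + 2 * π = π by ring] at this
    rw [← integral_Ioc_eq_integral_Ioo, ← intervalIntegral.integral_of_le (by linarith [pi_pos]),
      this, circleAverage_def, smul_eq_mul, mul_inv_cancel_left₀ (by positivity)]
  calc ∫⁻ θ in Ioo (-π) π, ‖f (circleMap 0 r θ)‖ₑ ^ 2
      = ∫⁻ θ in Ioo (-π) π, .ofReal (‖f (circleMap 0 r θ)‖ ^ 2) := by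
        simp only [ENNReal.ofReal_pow (norm_nonneg _), ofReal_norm]
    _ = .ofReal (2 * π * circleAverage (fun z ↦ ‖f z‖ ^ 2) 0 r) := by
        rw [← hint, ofReal_integral_eq_lintegral_ofReal
          (hcont.integrableOn_Icc.mono_set Ioo_subset_Icc_self) (.of_forall fun _ ↦ by positivity)]
    _ = .ofReal (2 * π) * ∑' k, ‖coefF f k‖ₑ ^ 2 * .ofReal r ^ (2 * k) := by
        have hsum := hasSum_sq_norm_coefF hf hr₀ hr
        rw [ENNReal.ofReal_mul (by positivity), ← hsum.tsum_eq,
          ENNReal.ofReal_tsum_of_nonneg (fun _ ↦ by positivity) hsum.summable]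
        simp only [ENNReal.ofReal_mul (sq_nonneg ‖_‖), ENNReal.ofReal_pow (norm_nonneg _),
          ENNReal.ofReal_pow hr₀, ofReal_norm]

end MaclaurinSeries

section MaximumModulus

variable {f : ℂ → ℂ} {R r : ℝ}

lemma Minf_nonneg (f : ℂ → ℂ) (r : ℝ) : 0 ≤ Minf f r :=
  Real.sSup_nonneg (by rintro _ ⟨z, _, rfl⟩; exact norm_nonneg _)

lemma norm_le_Minf (hf : DifferentiableOn ℂ f (ball 0 R)) (hr : r < R) {z : ℂ}
    (hz : z ∈ closedBall 0 r) : ‖f z‖ ≤ Minf f r := by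
  have hsub : closedBall (0 : ℂ) r ⊆ ball 0 R := closedBall_subset_ball hr
  have hbdd : BddAbove ((fun z ↦ ‖f z‖) '' sphere 0 r) :=
    (isCompact_sphere _ _).bddAbove_image
      (hf.continuousOn.mono (sphere_subset_closedBall.trans hsub)).norm
  have hsphere {w : ℂ} (hw : w ∈ sphere 0 r) : ‖f w‖ ≤ Minf f r := le_csSup hbdd ⟨w, hw, rfl⟩
  rcases eq_or_ne r 0 with rfl | hr'
  · exact hsphere (by simpa using hz)
  · rw [← closure_ball _ hr'] at hz hsub
    exact Complex.norm_le_of_forall_mem_frontier_norm_le isBounded_ball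
      (hf.mono hsub).diffContOnCl (fun w hw ↦ hsphere (by rwa [frontier_ball _ hr'] at hw)) hz

lemma Minf_le_of_forall_norm_le {M : ℝ} (hr₀ : 0 ≤ r) (h : ∀ z ∈ sphere (0 : ℂ) r, ‖f z‖ ≤ M) :
    Minf f r ≤ M :=
  csSup_le ((NormedSpace.sphere_nonempty.2 hr₀).image _) (by rintro _ ⟨z, hz, rfl⟩; exact h z hz)

lemma Minf_monotoneOn (hf : DifferentiableOn ℂ f (ball 0 R)) : MonotoneOn (Minf f) (Ico 0 R) :=
  fun _ hr _ hs hrs ↦ Minf_le_of_forall_norm_le hr.1 fun _ hz ↦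
    norm_le_Minf hf hs.2 (closedBall_subset_closedBall hrs (sphere_subset_closedBall hz))

lemma ofReal_Minf_le_tsum (hf : DifferentiableOn ℂ f (ball 0 R)) (hr₀ : 0 ≤ r) (hr : r < R) :
    .ofReal (Minf f r) ≤ ∑' k, ‖coefF f k‖ₑ * .ofReal r ^ k := by
  have hsum := summable_norm_coefF_mul_pow hf hr₀ hr
  have hle : Minf f r ≤ ∑' k, ‖coefF f k * (r : ℂ) ^ k‖ := by
    refine Minf_le_of_forall_norm_le hr₀ fun z hz ↦ ?_
    have hz' : ‖z‖ = r := mem_sphere_zero_iff_norm.1 hz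
    rw [← (hasSum_coefF_mul_pow hf (by rwa [mem_ball_zero_iff, hz'])).tsum_eq]
    have hterm (k : ℕ) : ‖coefF f k * z ^ k‖ = ‖coefF f k * (r : ℂ) ^ k‖ := by
      simp only [norm_mul, norm_pow, hz', Complex.norm_of_nonneg hr₀]
    rw [← tsum_congr hterm]
    exact norm_tsum_le_tsum_norm (by simpa only [hterm])
  refine (ENNReal.ofReal_le_ofReal hle).trans_eq ?_
  rw [ENNReal.ofReal_tsum_of_nonneg (fun _ ↦ norm_nonneg _) hsum]
  simp only [norm_mul, norm_pow, Complex.norm_of_nonneg hr₀, ENNReal.ofReal_mul (norm_nonneg _),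
    ENNReal.ofReal_pow hr₀, ofReal_norm]

end MaximumModulus

section AreaFormula

variable {f : ℂ → ℂ} {R r : ℝ}

lemma setLIntegral_ball_eq_polar {F : ℂ → ℝ≥0∞} (hF : Measurable F) (r : ℝ) :
    ∫⁻ z in ball 0 r, F z =
      ∫⁻ x in Ioo 0 r, .ofReal x * ∫⁻ θ in Ioo (-π) π, F (circleMap 0 x θ) := by
  have hsymm (x θ : ℝ) : Complex.polarCoord.symm (x, θ) = circleMap 0 x θ := by
    simp [circleMap, Complex.exp_mul_I]
  have hmeas : Measurable fun q : ℝ × ℝ ↦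
      ENNReal.ofReal q.1 • (ball 0 r).indicator F (Complex.polarCoord.symm q) := by
    have hsymm_meas : Measurable fun q : ℝ × ℝ ↦ Complex.polarCoord.symm q := by
      simp only [Complex.polarCoord_symm_apply]
      fun_prop
    exact measurable_fst.ennreal_ofReal.smul ((hF.indicator measurableSet_ball).comp hsymm_meas)
  rw [← lintegral_indicator measurableSet_ball, ← Complex.lintegral_comp_polarCoord_symm,
    show polarCoord.target = Ioi (0 : ℝ) ×ˢ Ioo (-π) π from rfl, Measure.volume_eq_prod,
    setLIntegral_prod _ hmeas.aemeasurable,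
    ← Iio_inter_Ioi (a := r) (b := 0), ← setLIntegral_indicator measurableSet_Iio]
  refine setLIntegral_congr_fun measurableSet_Ioi fun x (hx : 0 < x) ↦ ?_
  have hball (θ : ℝ) : circleMap 0 x θ ∈ ball 0 r ↔ x ∈ Iio r := by
    simp [abs_of_pos hx]
  by_cases hxr : x ∈ Iio r
  · simp only [hsymm, smul_eq_mul, indicator_of_mem, (hball _).2 hxr, hxr]
    exact lintegral_const_mul' _ _ ENNReal.ofReal_ne_top
  · simp only [hsymm, smul_eq_mul, indicator_of_notMem, mt (hball _).1 hxr, hxr, not_false_eq_true,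
      mul_zero, lintegral_zero]

lemma lintegral_ofReal_pow (hr : 0 ≤ r) (n : ℕ) :
    ∫⁻ x in Ioo 0 r, ENNReal.ofReal x ^ n = .ofReal (r ^ (n + 1) / (n + 1)) := by
  calc ∫⁻ x in Ioo 0 r, ENNReal.ofReal x ^ n = ∫⁻ x in Ioo 0 r, .ofReal (x ^ n) :=
        setLIntegral_congr_fun measurableSet_Ioo fun x hx ↦ (ENNReal.ofReal_pow hx.1.le n).symm
    _ = .ofReal (r ^ (n + 1) / (n + 1)) := by
        rw [← ofReal_integral_eq_lintegral_ofReal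
          ((continuous_pow n).integrableOn_Icc.mono_set Ioo_subset_Icc_self)
          ((ae_restrict_iff' measurableSet_Ioo).2 (.of_forall fun x hx ↦ pow_nonneg hx.1.le n)),
          ← integral_Ioc_eq_integral_Ioo, ← intervalIntegral.integral_of_le hr, integral_pow,
          zero_pow n.succ_ne_zero, sub_zero]

lemma sq_enorm_coefF_deriv_mul_lintegral_pow (f : ℂ → ℂ) (hr : 0 ≤ r) (k : ℕ) :
    .ofReal (2 * π) * (‖coefF (deriv f) k‖ₑ ^ 2 *
      ∫⁻ x in Ioo 0 r, ENNReal.ofReal x ^ (2 * k + 1)) =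
    .ofReal π * ((k + 1 : ℕ) * ‖coefF f (k + 1)‖ₑ ^ 2 * .ofReal r ^ (2 * (k + 1))) := by
  rw [coefF_deriv, lintegral_ofReal_pow hr]
  simp only [← ofReal_norm, ← ENNReal.ofReal_natCast, ← ENNReal.ofReal_pow hr,
    ← ENNReal.ofReal_pow (norm_nonneg _)]
  rw [← ENNReal.ofReal_mul (by positivity), ← ENNReal.ofReal_mul (by positivity),
    ← ENNReal.ofReal_mul (by positivity), ← ENNReal.ofReal_mul (by positivity),
    ← ENNReal.ofReal_mul (by positivity), norm_mul,
    show ‖(k : ℂ) + 1‖ = k + 1 by exact_mod_cast Complex.norm_natCast (k + 1)]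
  congr 1
  push_cast
  field_simp
  ring

theorem lintegral_enorm_deriv_sq_ball (hf : DifferentiableOn ℂ f (ball 0 R)) (hr₀ : 0 ≤ r)
    (hr : r < R) :
    ∫⁻ z in ball 0 r, ‖deriv f z‖ₑ ^ 2 =
      .ofReal π * ∑' k : ℕ, k * ‖coefF f k‖ₑ ^ 2 * .ofReal r ^ (2 * k) := by
  calc ∫⁻ z in ball 0 r, ‖deriv f z‖ₑ ^ 2
      = ∫⁻ x in Ioo 0 r, .ofReal x * ∫⁻ θ in Ioo (-π) π, ‖deriv f (circleMap 0 x θ)‖ₑ ^ 2 :=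
        setLIntegral_ball_eq_polar ((measurable_deriv f).enorm.pow_const 2) r
    _ = ∫⁻ x in Ioo 0 r, ∑' k, .ofReal (2 * π) *
          (‖coefF (deriv f) k‖ₑ ^ 2 * .ofReal x ^ (2 * k + 1)) := by
        refine setLIntegral_congr_fun measurableSet_Ioo fun x hx ↦ ?_
        rw [lintegral_enorm_sq_circleMap (hf.deriv isOpen_ball) hx.1.le (hx.2.trans hr),
          ENNReal.tsum_mul_left, mul_left_comm, ← ENNReal.tsum_mul_left]
        simp only [pow_succ, mul_left_comm, mul_comm]
    _ = ∑' k, .ofReal (2 * π) * (‖coefF (deriv f) k‖ₑ ^ 2 *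
          ∫⁻ x in Ioo 0 r, ENNReal.ofReal x ^ (2 * k + 1)) := by
        rw [lintegral_tsum fun k ↦ by fun_prop]
        refine tsum_congr fun k ↦ ?_
        rw [lintegral_const_mul _ (by fun_prop), lintegral_const_mul _ (by fun_prop)]
    _ = .ofReal π * ∑' k : ℕ, k * ‖coefF f k‖ₑ ^ 2 * .ofReal r ^ (2 * k) := by
        simp only [sq_enorm_coefF_deriv_mul_lintegral_pow f hr₀, ENNReal.tsum_mul_left]
        conv_rhs => rw [tsum_eq_zero_add' ENNReal.summable]
        simp only [Nat.cast_zero, zero_mul, zero_add]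

lemma abs_det_toSpanSingleton (c : ℂ) :
    |((ContinuousLinearMap.toSpanSingleton ℂ c).restrictScalars ℝ).det| = ‖c‖ ^ 2 := by
  simp [ContinuousLinearMap.det, LinearMap.det_restrictScalars, Complex.normSq_eq_norm_sq,
    Algebra.norm_complex_eq]

lemma lintegral_enorm_deriv_sq_eq_volume_image {s : Set ℂ} (hs : MeasurableSet s)
    (hf : ∀ z ∈ s, DifferentiableAt ℂ f z) (hinj : InjOn f s) :
    ∫⁻ z in s, ‖deriv f z‖ₑ ^ 2 = volume (f '' s) := by
  rw [← lintegral_abs_det_fderiv_eq_addHaar_image volume hs (fun z hz ↦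
    ((hf z hz).hasDerivAt.hasFDerivAt.restrictScalars ℝ).hasFDerivWithinAt) hinj]
  simp only [abs_det_toSpanSingleton, ENNReal.ofReal_pow (norm_nonneg _), ofReal_norm]

theorem tsum_mul_sq_enorm_coefF_le_sq_Minf (hf : DifferentiableOn ℂ f (ball 0 R))
    (hinj : InjOn f (ball 0 R)) (hr₀ : 0 ≤ r) (hr : r < R) :
    ∑' k : ℕ, k * ‖coefF f k‖ₑ ^ 2 * .ofReal r ^ (2 * k) ≤ .ofReal (Minf f r) ^ 2 := by
  have hsub : ball (0 : ℂ) r ⊆ ball 0 R := ball_subset_ball hr.le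
  have himage : f '' ball 0 r ⊆ closedBall 0 (Minf f r) :=
    image_subset_iff.2 fun z hz ↦
      mem_closedBall_zero_iff.2 (norm_le_Minf hf hr (ball_subset_closedBall hz))
  have harea : .ofReal π * ∑' k : ℕ, k * ‖coefF f k‖ₑ ^ 2 * .ofReal r ^ (2 * k) ≤
      .ofReal π * .ofReal (Minf f r) ^ 2 :=
    calc _ = volume (f '' ball 0 r) := by
          rw [← lintegral_enorm_deriv_sq_ball hf hr₀ hr,
            lintegral_enorm_deriv_sq_eq_volume_image measurableSet_ball
              (fun z hz ↦ hf.differentiableAt (isOpen_ball.mem_nhds (hsub hz))) (hinj.mono hsub)]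
      _ ≤ volume (closedBall (0 : ℂ) (Minf f r)) := measure_mono himage
      _ = _ := by
          rw [Complex.volume_closedBall, mul_comm, ← NNReal.coe_real_pi, ENNReal.ofReal_coe_nnreal]
  exact (ENNReal.mul_le_mul_iff_right (by simpa using pi_pos) ENNReal.ofReal_ne_top).1 harea

end AreaFormula

section UnivalentLowerBound

lemma sum_dyadicBlock_inv_le_one (n : ℕ) : ∑ k ∈ dyadicBlock n, (k + 1 : ℝ≥0∞)⁻¹ ≤ 1 :=
  calc ∑ k ∈ dyadicBlock n, (k + 1 : ℝ≥0∞)⁻¹ ≤ (dyadicBlock n).card • (2 ^ n : ℝ≥0∞)⁻¹ :=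
        Finset.sum_le_card_nsmul _ _ _ fun k hk ↦
          ENNReal.inv_le_inv.2 (by exact_mod_cast (mem_dyadicBlock.1 hk).1)
    _ = 1 := by
        rw [card_dyadicBlock, nsmul_eq_mul, Nat.cast_pow, Nat.cast_ofNat,
          ENNReal.mul_inv_cancel (by simp) (by simp)]

/-- Hölder's inequality with the weights `1 / (k + 1)`, of total mass at most one. -/
lemma sum_dyadicBlock_rpow_mul_le {p : ℝ} (hp₀ : 0 < p) (hp₂ : p ≤ 2) (b : ℕ → ℝ≥0∞) (n : ℕ) :
    ∑ k ∈ dyadicBlock n, b k ^ p * (k + 1 : ℝ≥0∞) ^ (p - 1) ≤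
      (∑ k ∈ dyadicBlock n, (k + 1 : ℝ≥0∞) * b k ^ 2) ^ (p / 2) := by
  have hq : 1 ≤ 2 / p := (one_le_div hp₀).2 hp₂
  have hw (k : ℕ) : b k ^ p * (k + 1 : ℝ≥0∞) ^ (p - 1) =
      (k + 1 : ℝ≥0∞)⁻¹ * ((k + 1) * b k) ^ p := by
    rw [ENNReal.mul_rpow_of_nonneg _ _ hp₀.le, ENNReal.rpow_sub _ _ (by simp) (by simp),
      ENNReal.rpow_one, ENNReal.div_eq_inv_mul]
    ring
  have hsq (k : ℕ) : (k + 1 : ℝ≥0∞)⁻¹ * (((k + 1) * b k) ^ p) ^ (2 / p) = (k + 1) * b k ^ 2 := by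
    rw [← ENNReal.rpow_mul, mul_div_cancel₀ _ hp₀.ne', ENNReal.rpow_ofNat, mul_pow,
      sq (k + 1 : ℝ≥0∞), mul_assoc, ENNReal.inv_mul_cancel_left (by simp) (by simp)]
  have holder : (∑ k ∈ dyadicBlock n, b k ^ p * (k + 1 : ℝ≥0∞) ^ (p - 1)) ^ (2 / p) ≤
      ∑ k ∈ dyadicBlock n, (k + 1 : ℝ≥0∞) * b k ^ 2 := by
    simp only [hw, ← hsq]
    refine (rpow_sum_mul_le _ hq _ _).trans (mul_le_of_le_one_left' ?_)
    exact ENNReal.rpow_le_one (sum_dyadicBlock_inv_le_one n) (sub_nonneg.2 hq)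
  rwa [← inv_div, ENNReal.le_rpow_inv_iff (by positivity)]

variable {f : ℂ → ℂ}

lemma sum_dyadicBlock_mul_sq_le (hf : DifferentiableOn ℂ f (ball 0 1))
    (hinj : InjOn f (ball 0 1)) (n : ℕ) :
    ∑ k ∈ dyadicBlock n, (k + 1 : ℝ≥0∞) * ‖coefF f k‖ₑ ^ 2 ≤
      512 * .ofReal (Minf f (dyadicRadius n)) ^ 2 := by
  set r := dyadicRadius n with hr
  have hr₁ : r < 1 := dyadicRadius_lt_one n
  rcases eq_or_ne n 0 with rfl | hn
  · have h₀ : ‖coefF f 0‖ₑ ≤ .ofReal (Minf f r) := by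
      rw [← ofReal_norm]
      refine ENNReal.ofReal_le_ofReal ?_
      simpa [coefF] using norm_le_Minf hf hr₁ (mem_closedBall_self (dyadicRadius_nonneg 0))
    calc ∑ k ∈ dyadicBlock 0, (k + 1 : ℝ≥0∞) * ‖coefF f k‖ₑ ^ 2 = 1 * ‖coefF f 0‖ₑ ^ 2 := by
          simp [dyadicBlock]
      _ ≤ 512 * .ofReal (Minf f r) ^ 2 := by gcongr; norm_num
  · have hterm {k : ℕ} (hk : k ∈ dyadicBlock n) : (k + 1 : ℝ≥0∞) * ‖coefF f k‖ₑ ^ 2 ≤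
        512 * (k * ‖coefF f k‖ₑ ^ 2 * .ofReal r ^ (2 * k)) := by
      obtain ⟨hk₁, hk₂⟩ := mem_dyadicBlock.1 hk
      have hn₂ : 2 ^ 1 ≤ 2 ^ n := Nat.pow_le_pow_right two_pos (Nat.one_le_iff_ne_zero.2 hn)
      have hsucc : (k + 1 : ℝ≥0∞) ≤ 2 * k := by exact_mod_cast (by omega : k + 1 ≤ 2 * k)
      have hpow : 1 ≤ 256 * ENNReal.ofReal r ^ (2 * k) := by
        have h := one_fourth_pow_le_dyadicRadius_pow (c := 4) (k := 2 * k) hn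
          (by rw [pow_succ] at hk₂; omega)
        rw [← hr] at h
        rw [← ENNReal.ofReal_pow (dyadicRadius_nonneg n), ← ENNReal.ofReal_ofNat,
          ← ENNReal.ofReal_mul (by norm_num), ENNReal.one_le_ofReal]
        linarith
      calc (k + 1 : ℝ≥0∞) * ‖coefF f k‖ₑ ^ 2
          ≤ 2 * k * ‖coefF f k‖ₑ ^ 2 * (256 * .ofReal r ^ (2 * k)) :=
            (mul_le_mul_left hsucc _).trans (le_mul_of_one_le_right' hpow)
        _ = 512 * (k * ‖coefF f k‖ₑ ^ 2 * .ofReal r ^ (2 * k)) := by ring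
    calc ∑ k ∈ dyadicBlock n, (k + 1 : ℝ≥0∞) * ‖coefF f k‖ₑ ^ 2
        ≤ 512 * ∑ k ∈ dyadicBlock n, k * ‖coefF f k‖ₑ ^ 2 * .ofReal r ^ (2 * k) := by
          rw [Finset.mul_sum]
          exact Finset.sum_le_sum fun k hk ↦ hterm hk
      _ ≤ 512 * .ofReal (Minf f r) ^ 2 := by
          gcongr
          exact (ENNReal.sum_le_tsum _).trans
            (tsum_mul_sq_enorm_coefF_le_sq_Minf hf hinj (dyadicRadius_nonneg n) hr₁)

lemma sum_dyadicBlock_rpow_mul_le_Minf_rpow {p : ℝ} (hp₀ : 0 < p) (hp₂ : p ≤ 2)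
    (hf : DifferentiableOn ℂ f (ball 0 1)) (hinj : InjOn f (ball 0 1)) (n : ℕ) :
    ∑ k ∈ dyadicBlock n, ‖coefF f k‖ₑ ^ p * (k + 1 : ℝ≥0∞) ^ (p - 1) ≤
      512 ^ (p / 2) * .ofReal (Minf f (dyadicRadius n)) ^ p :=
  calc _ ≤ (512 * .ofReal (Minf f (dyadicRadius n)) ^ 2) ^ (p / 2) :=
        (sum_dyadicBlock_rpow_mul_le hp₀ hp₂ _ n).trans
          (ENNReal.rpow_le_rpow (sum_dyadicBlock_mul_sq_le hf hinj n) (by positivity))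
    _ = _ := by
        rw [ENNReal.mul_rpow_of_nonneg _ _ (by positivity), ← ENNReal.rpow_natCast_mul,
          Nat.cast_ofNat, mul_div_cancel₀ _ two_ne_zero]

variable {μ : Measure ℝ} {D A ρ : ℝ≥0} {p : ℝ}

theorem exists_tsum_le_lintegral_Minf_rpow (hμ : μ (Ico 0 1) ≠ ∞)
    (h : IsDyadicRegular (dyadicTail μ) D A ρ) (hp₀ : 0 < p) (hp₂ : p ≤ 2) :
    ∃ C : ℝ≥0, ∀ f : ℂ → ℂ, DifferentiableOn ℂ f (ball 0 1) → InjOn f (ball 0 1) →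
      ∑' k : ℕ, ‖coefF f k‖ₑ ^ p * (k + 1 : ℝ≥0∞) ^ (p - 1) * lmoment μ k ≤
        C * ∫⁻ x in Ico 0 1, .ofReal (Minf f x) ^ p ∂μ := by
  obtain ⟨B, hB⟩ := exists_lmoment_le_mul_dyadicTail h
  obtain ⟨C, hC⟩ := exists_tsum_mul_dyadicTail_le hμ h
  refine ⟨B * 512 ^ (p / 2) * C, fun f hf hinj ↦ ?_⟩
  have hmono : MonotoneOn (fun x ↦ ENNReal.ofReal (Minf f x) ^ p) (Ico 0 1) := fun x hx y hy hxy ↦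
    ENNReal.rpow_le_rpow (ENNReal.ofReal_le_ofReal (Minf_monotoneOn hf hx hy hxy)) hp₀.le
  calc ∑' k : ℕ, ‖coefF f k‖ₑ ^ p * (k + 1 : ℝ≥0∞) ^ (p - 1) * lmoment μ k
      ≤ ∑' n, B * dyadicTail μ n *
          ∑ k ∈ dyadicBlock n, ‖coefF f k‖ₑ ^ p * (k + 1 : ℝ≥0∞) ^ (p - 1) := by
        rw [tsum_eq_tsum_sum_dyadicBlock]
        refine ENNReal.tsum_le_tsum fun n ↦ ?_
        rw [mul_comm, Finset.sum_mul]
        refine Finset.sum_le_sum fun k hk ↦ mul_le_mul_right ?_ _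
        simpa only [mem_dyadicBlock_iff_log_eq.1 hk] using hB k
    _ ≤ ∑' n, B * 512 ^ (p / 2) *
          (.ofReal (Minf f (dyadicRadius n)) ^ p * dyadicTail μ n) := by
        refine ENNReal.tsum_le_tsum fun n ↦ (mul_le_mul_right
          (sum_dyadicBlock_rpow_mul_le_Minf_rpow hp₀ hp₂ hf hinj n) _).trans_eq ?_
        ring
    _ ≤ B * 512 ^ (p / 2) * (C * ∫⁻ x in Ico 0 1, .ofReal (Minf f x) ^ p ∂μ) := by
        rw [ENNReal.tsum_mul_left]
        gcongr
        exact hC _ hmono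
    _ = (B * 512 ^ (p / 2) * C : ℝ≥0) * ∫⁻ x in Ico 0 1, .ofReal (Minf f x) ^ p ∂μ := by
        rw [ENNReal.coe_mul, ENNReal.coe_mul, ENNReal.coe_rpow_of_nonneg _ (by positivity),
          ENNReal.coe_ofNat, ← mul_assoc]

end UnivalentLowerBound

section AnalyticUpperBound

variable {μ : Measure ℝ} {D A ρ : ℝ≥0} {p : ℝ}

theorem exists_lintegral_Minf_rpow_le (h : IsDyadicRegular (dyadicTail μ) D A ρ) (hp : 1 ≤ p) :
    ∃ C : ℝ≥0, ∀ f : ℂ → ℂ, DifferentiableOn ℂ f (ball 0 1) →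
      ∫⁻ x in Ico 0 1, .ofReal (Minf f x) ^ p ∂μ ≤
        C * ∑' k : ℕ, ‖coefF f k‖ₑ ^ p * (k + 1 : ℝ≥0∞) ^ (p - 1) * lmoment μ k := by
  obtain ⟨C, hC⟩ := exists_lintegral_rpow_tsum_le h hp
  exact ⟨C, fun f hf ↦ (setLIntegral_mono' measurableSet_Ico fun x hx ↦
    ENNReal.rpow_le_rpow (ofReal_Minf_le_tsum hf hx.1 hx.2) (by positivity)).trans (hC _)⟩

end AnalyticUpperBound

section RadialWeight

variable {ω : ℝ → ℝ}

/-- The measure `ω(r) dr` on the radii. -/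
def radialMeasure (ω : ℝ → ℝ) : Measure ℝ :=
  volume.withDensity fun r ↦ ENNReal.ofReal (ω r)

namespace IsRadialWeight

lemma integrableOn_Ioo (hω : IsRadialWeight ω) {r : ℝ} (hr : 0 ≤ r) : IntegrableOn ω (Ioo r 1) :=
  hω.2.2.1.mono_set (Ioo_subset_Ioo_left hr)

lemma setLIntegral_radialMeasure (hω : IsRadialWeight ω) (F : ℝ → ℝ≥0∞) :
    ∫⁻ x in Ico 0 1, F x ∂radialMeasure ω = ∫⁻ x in Ioo 0 1, F x * .ofReal (ω x) := by
  rw [radialMeasure, setLIntegral_withDensity_eq_setLIntegral_mul_non_measurable _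
    hω.1.ennreal_ofReal _ measurableSet_Ico (.of_forall fun _ ↦ ENNReal.ofReal_lt_top),
    ← setLIntegral_congr Ioo_ae_eq_Ico]
  simp only [Pi.mul_apply, mul_comm]

lemma dyadicTail_radialMeasure (hω : IsRadialWeight ω) (j : ℕ) :
    dyadicTail (radialMeasure ω) j = .ofReal (tailInt ω (dyadicRadius j)) := by
  rw [dyadicTail, radialMeasure, withDensity_apply _ measurableSet_Ico, tailInt,
    ← setLIntegral_congr Ioo_ae_eq_Ico, ofReal_integral_eq_lintegral_ofReal
      (hω.integrableOn_Ioo (dyadicRadius_nonneg j)) (.of_forall hω.2.1)]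

lemma radialMeasure_Ico_ne_top (hω : IsRadialWeight ω) : radialMeasure ω (Ico 0 1) ≠ ∞ := by
  rw [← dyadicRadius_zero, ← dyadicTail, hω.dyadicTail_radialMeasure]
  exact ENNReal.ofReal_ne_top

lemma momentW_nonneg (hω : IsRadialWeight ω) (x : ℝ) : 0 ≤ momentW ω x :=
  setIntegral_nonneg measurableSet_Ioo fun r hr ↦ mul_nonneg (rpow_nonneg hr.1.le x) (hω.2.1 r)

lemma lmoment_radialMeasure (hω : IsRadialWeight ω) (k : ℕ) :
    lmoment (radialMeasure ω) k = .ofReal (momentW ω k) := by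
  have hint : IntegrableOn (fun r ↦ r ^ (k : ℝ) * ω r) (Ioo 0 1) := by
    simp only [rpow_natCast]
    refine hω.2.2.1.bdd_mul (c := 1) (by fun_prop)
      ((ae_restrict_iff' measurableSet_Ioo).2 (.of_forall fun r hr ↦ ?_))
    rw [norm_pow, norm_of_nonneg hr.1.le]
    exact pow_le_one₀ hr.1.le hr.2.le
  rw [lmoment, hω.setLIntegral_radialMeasure, momentW, ofReal_integral_eq_lintegral_ofReal hint
    ((ae_restrict_iff' measurableSet_Ioo).2 (.of_forall fun r hr ↦
      mul_nonneg (rpow_nonneg hr.1.le _) (hω.2.1 r)))]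
  refine setLIntegral_congr_fun measurableSet_Ioo fun r hr ↦ ?_
  rw [rpow_natCast, ENNReal.ofReal_mul (pow_nonneg hr.1.le k), ENNReal.ofReal_pow hr.1.le]

lemma tailInt_antitoneOn (hω : IsRadialWeight ω) : AntitoneOn (tailInt ω) (Ici 0) :=
  fun _ hr _ _ hrs ↦ setIntegral_mono_set (hω.integrableOn_Ioo hr) (.of_forall hω.2.1)
    (Ioo_subset_Ioo_left hrs).eventuallyLE

lemma exists_dyadicTail_le_mul_succ (hω : IsRadialWeight ω) (hD : Dhat ω) :
    ∃ D : ℝ≥0, ∀ j, dyadicTail (radialMeasure ω) j ≤ D * dyadicTail (radialMeasure ω) (j + 1) := by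
  obtain ⟨C, hC, hdouble⟩ := hD
  refine ⟨C.toNNReal, fun j ↦ ?_⟩
  have hmid : (1 + dyadicRadius j) / 2 = dyadicRadius (j + 1) := by
    rw [dyadicRadius, dyadicRadius, pow_succ]
    ring
  rw [hω.dyadicTail_radialMeasure, hω.dyadicTail_radialMeasure, ← ENNReal.ofReal,
    ← ENNReal.ofReal_mul (by positivity), ← hmid]
  exact ENNReal.ofReal_le_ofReal (hdouble _ (dyadicRadius_mem_Ico j))

lemma exists_dyadicTail_add_le_mul (hω : IsRadialWeight ω) (hD : Dcheck ω) :
    ∃ m : ℕ, m ≠ 0 ∧ ∃ q : ℝ≥0, q ≠ 0 ∧ q < 1 ∧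
      ∀ j, dyadicTail (radialMeasure ω) (j + m) ≤ q * dyadicTail (radialMeasure ω) j := by
  obtain ⟨K, hK, C, hC, hdecay⟩ := hD
  obtain ⟨m, hm⟩ := pow_unbounded_of_one_lt K one_lt_two
  have hK₀ : 0 < K := one_pos.trans hK
  have hC₀ : 0 < C := one_pos.trans hC
  refine ⟨m, ?_, C.toNNReal⁻¹, by simpa, inv_lt_one_of_one_lt₀ (by simpa), fun j ↦ ?_⟩
  · rintro rfl
    linarith [pow_zero (2 : ℝ)]
  have hradius : 1 - (1 - dyadicRadius j) / K ≤ dyadicRadius (j + m) := by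
    have hpow : (1 / 2 : ℝ) ^ (j + m) ≤ (1 / 2) ^ j / K := by
      rw [pow_add, div_eq_mul_inv _ K]
      refine mul_le_mul_of_nonneg_left ?_ (by positivity)
      rw [one_div, inv_pow]
      exact inv_anti₀ hK₀ hm.le
    rw [one_sub_dyadicRadius]
    linarith [one_sub_dyadicRadius (j + m)]
  have hmem : 1 - (1 - dyadicRadius j) / K ∈ Ici (0 : ℝ) :=
    sub_nonneg.2 (div_le_one_of_le₀ (by linarith [dyadicRadius_nonneg j]) hK₀.le)
  have hreal : tailInt ω (dyadicRadius (j + m)) ≤ C⁻¹ * tailInt ω (dyadicRadius j) := by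
    rw [le_inv_mul_iff₀ hC₀]
    exact (mul_le_mul_of_nonneg_left (hω.tailInt_antitoneOn hmem (dyadicRadius_nonneg _) hradius)
      hC₀.le).trans (hdecay _ (dyadicRadius_mem_Ico j))
  rw [hω.dyadicTail_radialMeasure, hω.dyadicTail_radialMeasure, ← Real.toNNReal_inv,
    ← ENNReal.ofReal, ← ENNReal.ofReal_mul (by positivity)]
  exact ENNReal.ofReal_le_ofReal hreal

theorem exists_isDyadicRegular (hω : IsRadialWeight ω) (hD : Dclass ω) :
    ∃ D A ρ : ℝ≥0, IsDyadicRegular (dyadicTail (radialMeasure ω)) D A ρ := by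
  obtain ⟨D, hdouble⟩ := hω.exists_dyadicTail_le_mul_succ hD.1
  obtain ⟨m, hm, q, hq₀, hq₁, hdecay⟩ := hω.exists_dyadicTail_add_le_mul hD.2
  obtain ⟨A, ρ, hρ, hgeom⟩ :=
    exists_geometric_decay_of_le_mul (dyadicTail_antitone _) hm hq₀ hq₁ hdecay
  exact ⟨D, A, ρ, hdouble, hgeom, hρ⟩

end IsRadialWeight

end RadialWeight

section RealValued

variable {ω : ℝ → ℝ} {f : ℂ → ℂ} {p : ℝ}

lemma Jp_eq_toReal_lintegral (hω : IsRadialWeight ω) (hp : 0 ≤ p)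
    (hf : DifferentiableOn ℂ f (ball 0 1)) :
    Jp p ω f = (∫⁻ x in Ico 0 1, .ofReal (Minf f x) ^ p ∂radialMeasure ω).toReal := by
  have hmeas : AEMeasurable (Minf f) (volume.restrict (Ioo 0 1)) :=
    aemeasurable_restrict_of_monotoneOn measurableSet_Ioo
      ((Minf_monotoneOn hf).mono Ioo_subset_Ico_self)
  rw [Jp, integral_eq_lintegral_of_nonneg_ae
    (.of_forall fun x ↦ mul_nonneg (rpow_nonneg (Minf_nonneg f x) p) (hω.2.1 x))
    ((hmeas.pow_const p).mul hω.1.aemeasurable).aestronglyMeasurable,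
    hω.setLIntegral_radialMeasure]
  simp only [ENNReal.ofReal_mul (rpow_nonneg (Minf_nonneg f _) p),
    ENNReal.ofReal_rpow_of_nonneg (Minf_nonneg f _) hp]

lemma tsum_coefF_eq_toReal_tsum (hω : IsRadialWeight ω) (hp : 0 ≤ p) (f : ℂ → ℂ) :
    ∑' k : ℕ, ‖coefF f k‖ ^ p * ((k : ℝ) + 1) ^ (p - 1) * momentW ω k =
      (∑' k : ℕ, ‖coefF f k‖ₑ ^ p * (k + 1 : ℝ≥0∞) ^ (p - 1) *
        lmoment (radialMeasure ω) k).toReal := by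
  rw [ENNReal.tsum_toReal_eq fun k ↦ ?_]
  · refine tsum_congr fun k ↦ ?_
    rw [hω.lmoment_radialMeasure, ← ofReal_natCast_add_one_rpow, ← ofReal_norm,
      ENNReal.ofReal_rpow_of_nonneg (norm_nonneg _) hp, ENNReal.toReal_mul, ENNReal.toReal_mul,
      ENNReal.toReal_ofReal (by positivity), ENNReal.toReal_ofReal (by positivity),
      ENNReal.toReal_ofReal (hω.momentW_nonneg k)]
  · rw [hω.lmoment_radialMeasure, ← ofReal_natCast_add_one_rpow]
    exact ENNReal.mul_ne_top (ENNReal.mul_ne_top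
      (ENNReal.rpow_ne_top_of_nonneg hp enorm_ne_top) ENNReal.ofReal_ne_top) ENNReal.ofReal_ne_top

/-- If one of `a`, `b` is infinite, so is the other, and both real values are the junk value `0`. -/
lemma toReal_le_mul_toReal {a b : ℝ≥0∞} {C C' : ℝ≥0} (h : a ≤ C * b) (h' : b ≤ C' * a) :
    a.toReal ≤ C * b.toReal := by
  rcases eq_or_ne b ∞ with rfl | hb
  · obtain rfl : a = ∞ := by
      by_contra ha
      exact ENNReal.mul_ne_top ENNReal.coe_ne_top ha (top_le_iff.1 h')
    simp
  · calc a.toReal ≤ (C * b).toReal :=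
          ENNReal.toReal_mono (ENNReal.mul_ne_top ENNReal.coe_ne_top hb) h
      _ = C * b.toReal := by rw [ENNReal.toReal_mul, ENNReal.coe_toReal]

end RealValued

/-- Theorem 7: for `1 ≤ p ≤ 2` and `ω ∈ 𝒟`,
`J^p_ω(f) ≍ Σ |f̂(k)|^p (k+1)^{p-1} ω_k` for conformal `f`. -/
theorem statement6 (p : ℝ) (hp1 : 1 ≤ p) (hp2 : p ≤ 2)
    (ω : ℝ → ℝ) (hω : IsRadialWeight ω) (hD : Dclass ω) :
    ∃ C : ℝ, 1 ≤ C ∧ ∀ f : ℂ → ℂ, DifferentiableOn ℂ f (ball (0:ℂ) 1) →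
      InjOn f (ball (0:ℂ) 1) →
      ((1 / C) * (∑' k : ℕ, ‖coefF f k‖ ^ p * ((k : ℝ) + 1) ^ (p - 1)
            * momentW ω k) ≤ Jp p ω f ∧
        Jp p ω f ≤ C * ∑' k : ℕ, ‖coefF f k‖ ^ p * ((k : ℝ) + 1) ^ (p - 1)
            * momentW ω k) := by
  have hp₀ : 0 < p := one_pos.trans_le hp1
  obtain ⟨D, A, ρ, hreg⟩ := hω.exists_isDyadicRegular hD
  obtain ⟨C₁, hlower⟩ :=
    exists_tsum_le_lintegral_Minf_rpow hω.radialMeasure_Ico_ne_top hreg hp₀ hp2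
  obtain ⟨C₂, hupper⟩ := exists_lintegral_Minf_rpow_le hreg hp1
  refine ⟨max 1 (max C₁ C₂), le_max_left _ _, fun f hf hinj ↦ ?_⟩
  rw [Jp_eq_toReal_lintegral hω hp₀.le hf, tsum_coefF_eq_toReal_tsum hω hp₀.le]
  constructor
  · rw [one_div, inv_mul_le_iff₀ (by positivity)]
    exact (toReal_le_mul_toReal (hlower f hf hinj) (hupper f hf)).trans (by gcongr; simp)
  · exact (toReal_le_mul_toReal (hupper f hf) (hlower f hf hinj)).trans (by gcongr; simp)
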